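/- For every ε with 0 < ε, ε² ≤ 1/2, and 1/ε a positive integer, there is a constant c > 0 and a deterministic online algorithm for scheduling jobs on m unrelated machines which, on every instance J, rejects a set R of jobs with ∑_{j∈R} w_j ≤ c·ε·∑_{j∈J} w_j, schedules every job of J∖R non-preemptively on one machine, and achieves total weighted flow-time ∑_{j∉R} w_j·(C_j − r_j) ≤ (c/ε³)·F*, where F* is the minimum total weighted flow-time of any offline (possibly preemptive and migratory) schedule that completes all jobs of J. -/

import Mathlib

/-!
The proof is a primal-dual analysis with `c = 48`; only `ε ≤ 1` is used.

*The algorithm.* Each machine keeps a queue of waiting jobs with residual weights (initially the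
weights), and an idle machine starts the waiting job of highest residual density. An arriving job
of weight `w` is dispatched to the machine `i` which minimizes
`λ_i = (8 / ε) w p_i + Φ_i`, where `Φ_i` is the interaction of the new job with the jobs present:
each pair of jobs counts with the smaller of the two delays that one can cause to the other.
On that machine, residual weight `ε w` is then dropped from the waiting jobs, lowest density first,
where a job left with half of its weight is rejected, and another `ε w` from the running job, which
is interrupted and rejected when nothing is left. Hence the rejected weight is `O(ε)` times the
total weight (`rejPot`, `rejected_weight`), and each job that survives keeps at least half of its
weight while it waits.

*Cost.* The potential `Pot` is the cost still to be paid by the present jobs. An arrival raises it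
by at most `(1 - ε / 2) λ_j`, because the dropped weight no longer has to wait (`arrM_spec`), and a
slot lowers it by the weight present (`tickM_spec`). So the total weighted flow-time is `O(∑ λ_j)`.

*Duality.* The dual variable `β_it` of machine `i` and slot `t` is the weight present in that slot,
plus the weight `x` of each drop made at a time `s ≤ t < s + ⌊R / 4⌋`, where `R` is the remaining
work on the machine at the drop. The potential is charged for these as well, so
`∑ β_it ≤ (1 - ε / 2) ∑ λ_j` (`sum_dB_le`). The constraint
`λ_j ≤ (8 / ε) w_j p_ij + p_ij β_it + 4 w_j (t + 1 - r_j)`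
holds for all `i` and `t ≥ r_j`. Indeed, from the arrival of `j` on, the interaction `Φ_i` of `j`
with machine `i` shrinks by at most `w_j` per slot and by `x p_ij` at a drop of `x`; if a drop has
left the dual before `t`, then `Φ_i ≤ w_j R = O(w_j (t + 1 - s))` at the time `s` of that drop
(`Feas`, `Feas.drop`). Applied to the slots in which an offline schedule processes `j`, and summed
over all jobs, the constraints give
`∑ λ_j ≤ ∑ β_it + (8 / ε + 4) F*` (`job_dual`, `dual_bound`), hence `∑ λ_j ≤ (24 / ε²) F*`.
-/

open Finset

noncomputable section

namespace NPSched

/-- A job instance on `m` unrelated machines: a finite set `J ⊆ ℕ` of jobs, each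
`j ∈ J` having an integer release time `r j`, a positive integer size `p i j` on each
machine `i`, and a positive real weight `w j`. -/
structure MInstance (m : ℕ) where
  J : Finset ℕ
  r : ℕ → ℕ
  p : Fin m → ℕ → ℕ
  w : ℕ → ℝ
  hp : ∀ i : Fin m, ∀ j ∈ J, 0 < p i j
  hw : ∀ j ∈ J, 0 < w j

/-- The output of a scheduling algorithm: `sched i t` is the job (if any) processed by
machine `i` in the unit slot `[t, t+1]`, and `rej j = some s` means job `j` is
rejected at time `s`. -/
structure MOutput (m : ℕ) where
  sched : Fin m → ℕ → Option ℕ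
  rej : ℕ → Option ℕ

/-- Two instances agree up to time `t`: they contain the same jobs released by time
`t`, with identical release times, sizes and weights. -/
def MAgreeUpTo {m : ℕ} (I₁ I₂ : MInstance m) (t : ℕ) : Prop :=
  I₁.J.filter (fun j => I₁.r j ≤ t) = I₂.J.filter (fun j => I₂.r j ≤ t) ∧
  ∀ j ∈ I₁.J.filter (fun j => I₁.r j ≤ t),
    I₁.r j = I₂.r j ∧ (∀ i, I₁.p i j = I₂.p i j) ∧ I₁.w j = I₂.w j

/-- A deterministic algorithm (a function from instances to outputs) is online if its
decisions up to any time `t` — the schedule in slots `[u, u+1]` for `u ≤ t` and the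
rejections performed by time `t` — depend only on the jobs released by time `t`. -/
def MOnline {m : ℕ} (Alg : MInstance m → MOutput m) : Prop :=
  ∀ I₁ I₂ t, MAgreeUpTo I₁ I₂ t →
    (∀ i, ∀ u ≤ t, (Alg I₁).sched i u = (Alg I₂).sched i u) ∧
    (∀ j, ∀ s ≤ t, ((Alg I₁).rej j = some s ↔ (Alg I₂).rej j = some s))

/-- The set of jobs of instance `I` rejected by the algorithm's output `out`. -/
def MRej {m : ℕ} (I : MInstance m) (out : MOutput m) : Finset ℕ :=
  I.J.filter fun j => out.rej j ≠ none

/-- An offline (possibly preemptive and migratory) schedule that completes every job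
of `J`, with completion times `C`: it processes only released jobs of `J`, processes
each job on at most one machine per slot, and by time `C j ≥ r j` job `j` has been
fully processed, i.e. the fractions of `j` done on the machines add up to at least
one. -/
def MOffOK {m : ℕ} (I : MInstance m) (osched : Fin m → ℕ → Option ℕ) (C : ℕ → ℕ) :
    Prop :=
  (∀ i t j, osched i t = some j → j ∈ I.J ∧ I.r j ≤ t) ∧
  (∀ t j (i i' : Fin m), osched i t = some j → osched i' t = some j → i = i') ∧
  ∀ j ∈ I.J, I.r j ≤ C j ∧
    (1 : ℝ) ≤ ∑ i : Fin m,
      (((Finset.range (C j)).filter fun t => osched i t = some j).card : ℝ) / I.p i j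

/-! ### The algorithm -/

/-- A released job: identifier, release time, weight and size vector, together with the size `p`
on the machine to which it is dispatched and its dual value `l` (both set at dispatch). -/
structure Job (m : ℕ) where
  id : ℕ
  r : ℕ
  w : ℝ
  pv : Fin m → ℕ
  p : ℕ
  l : ℝ

/-- A job together with its residual weight `v`. -/
structure Ent (m : ℕ) where
  j : Job m
  v : ℝ

/-- The state of one machine: the waiting jobs `q`; the running job with its number of
remaining slots; the log of weight drops `(x, R, s)` (weight `x` dropped at time `s`, when
the total remaining work was `R`); the rejected jobs; the finished jobs with their completion
times. The log only serves the analysis. -/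
structure Mach (m : ℕ) where
  q : Multiset (Ent m)
  run : Option (Ent m × ℕ)
  log : Multiset (ℝ × ℕ × ℕ)
  rej : Multiset (Job m)
  done : Multiset (Job m × ℕ)

variable {m : ℕ}

/-- Remaining slots of the running job (`0` if idle). -/
def Mach.rem (M : Mach m) : ℕ := M.run.elim 0 (fun x => x.2)
/-- Residual weight of the running job (`0` if idle). -/
def Mach.rz (M : Mach m) : ℝ := M.run.elim 0 (fun x => x.1.v)
/-- Weight of the running job (`0` if idle). -/
def Mach.rw (M : Mach m) : ℝ := M.run.elim 0 (fun x => x.1.j.w)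

/-- All jobs ever dispatched to the machine. -/
def Mach.all (M : Mach m) : Multiset (Job m) :=
  M.q.map Ent.j + M.run.elim 0 (fun x => {x.1.j}) + M.rej + M.done.map Prod.fst

/-- Total size of the waiting jobs. -/
def qP (q : Multiset (Ent m)) : ℕ := (q.map fun e => e.j.p).sum
/-- Total residual weight of the waiting jobs. -/
def qW (q : Multiset (Ent m)) : ℝ := (q.map fun e => e.v).sum
/-- Interaction of the waiting jobs with a job of weight `w` and size `p`: processing the two
in density order delays the one of lower density by the size of the other. -/
def qPhi (q : Multiset (Ent m)) (w : ℝ) (p : ℕ) : ℝ :=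
  (q.map fun e => min (e.v * (p : ℝ)) (w * (e.j.p : ℝ))).sum
/-- Residual weighted completion time of the waiting jobs when they are processed in order of
decreasing residual density, written symmetrically: each unordered pair of jobs contributes the
smaller of the two possible delays. -/
def qPsi (q : Multiset (Ent m)) : ℝ :=
  ((q.map fun a => (q.map fun b => min (a.v * (b.j.p : ℝ)) (b.v * (a.j.p : ℝ))).sum).sum
    + (q.map fun a => a.v * (a.j.p : ℝ)).sum) / 2

/-- Interaction of the whole machine (running job included) with a job of weight `w` and
size `p`. -/
def Mach.Phi (M : Mach m) (w : ℝ) (p : ℕ) : ℝ := min (M.rz * p) (w * M.rem) + qPhi M.q w p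

theorem exists_min_dens (q : Multiset (Ent m)) (h : q ≠ 0) :
    ∃ c : Ent m × Multiset (Ent m), q = c.1 ::ₘ c.2 ∧
      ∀ e ∈ c.2, c.1.v / c.1.j.p ≤ e.v / e.j.p := by
  classical
  obtain ⟨a, ha, hmin⟩ := Finset.exists_min_image q.toFinset (fun e => e.v / (e.j.p : ℝ))
    (by simpa [Finset.nonempty_iff_ne_empty] using h)
  refine ⟨(a, q.erase a), (Multiset.cons_erase (by simpa using ha)).symm, fun e he => ?_⟩
  exact hmin e (by simpa using Multiset.mem_of_mem_erase he)

theorem exists_max_dens (q : Multiset (Ent m)) (h : q ≠ 0) :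
    ∃ c : Ent m × Multiset (Ent m), q = c.1 ::ₘ c.2 ∧
      ∀ e ∈ c.2, e.v / e.j.p ≤ c.1.v / c.1.j.p := by
  classical
  obtain ⟨a, ha, hmax⟩ := Finset.exists_max_image q.toFinset (fun e => e.v / (e.j.p : ℝ))
    (by simpa [Finset.nonempty_iff_ne_empty] using h)
  refine ⟨(a, q.erase a), (Multiset.cons_erase (by simpa using ha)).symm, fun e he => ?_⟩
  exact hmax e (by simpa using Multiset.mem_of_mem_erase he)

open Classical in
/-- Drop residual weight `b` from the waiting jobs at time `s`, lowest residual density first. A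
job left with at most half of its weight is rejected; only the residual weight above that
threshold is charged to `b`. The first argument bounds the number of rejections. -/
def dropQ (s : ℕ) : ℕ → ℝ → Mach m → Mach m
  | 0, _, M => M
  | k + 1, b, M =>
    if h : M.q = 0 then M else
      let c := (exists_min_dens M.q h).choose
      if c.1.v - b ≤ c.1.j.w / 2 then
        dropQ s k (b - (c.1.v - c.1.j.w / 2))
          { M with q := c.2, rej := c.1.j ::ₘ M.rej,
                   log := (c.1.v, M.rem + qP M.q, s) ::ₘ M.log }
      else
        { M with q := ⟨c.1.j, c.1.v - b⟩ ::ₘ c.2,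
                 log := (b, M.rem + qP M.q, s) ::ₘ M.log }

open Classical in
/-- Drop residual weight `b` from the running job at time `s`; the job is interrupted and
rejected when nothing is left. -/
def dropRun (s : ℕ) (b : ℝ) (M : Mach m) : Mach m :=
  match M.run with
  | none => M
  | some (e, n) =>
    if e.v ≤ b then
      { M with run := none, rej := e.j ::ₘ M.rej, log := (e.v, n + qP M.q, s) ::ₘ M.log }
    else
      { M with run := some (⟨e.j, e.v - b⟩, n), log := (b, n + qP M.q, s) ::ₘ M.log }

/-- Put a new job into the queue with its full weight. -/
def Mach.ins (M : Mach m) (a : Job m) : Mach m := { M with q := ⟨a, a.w⟩ ::ₘ M.q }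

/-- Dispatching a job `a` to a machine at time `s`. -/
def arrM (ε : ℝ) (s : ℕ) (M : Mach m) (a : Job m) : Mach m :=
  (dropRun s (ε * a.w) (dropQ s (Multiset.card M.q) (ε * a.w) M)).ins a

open Classical in
/-- An idle machine starts the waiting job of highest residual density. The running job gets
its full weight back as residual weight. -/
def startM (M : Mach m) : Mach m :=
  match M.run with
  | some _ => M
  | none => if h : M.q = 0 then M else
      let c := (exists_max_dens M.q h).choose
      { M with q := c.2, run := some (⟨c.1.j, c.1.j.w⟩, c.1.j.p) }

/-- Execution of slot `u`. -/
def tickM (u : ℕ) (M : Mach m) : Mach m :=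
  match M.run with
  | none => M
  | some (e, n) =>
    if n ≤ 1 then { M with run := none, done := (e.j, u + 1) ::ₘ M.done }
    else { M with run := some (e, n - 1) }

/-- The dual value of job `a` on machine `i` in state `M`; jobs are dispatched so as to
minimize it. -/
def lamOf (ε : ℝ) (M : Mach m) (i : Fin m) (a : Job m) : ℝ :=
  8 / ε * a.w * a.pv i + M.Phi a.w (a.pv i)

/-- The job record of `a` once dispatched to machine `i` in state `M`. -/
def disp (ε : ℝ) (M : Mach m) (i : Fin m) (a : Job m) : Job m :=
  { a with p := a.pv i, l := lamOf ε M i a }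

theorem exists_min_mach (hm : 0 < m) (f : Fin m → ℝ) : ∃ i, ∀ i', f i ≤ f i' := by
  have : Nonempty (Fin m) := ⟨⟨0, hm⟩⟩
  exact Finite.exists_min f

/-- Arrival of job `a` at time `s`. -/
def arrive (hm : 0 < m) (ε : ℝ) (s : ℕ) (G : Fin m → Mach m) (a : Job m) : Fin m → Mach m :=
  let i := (exists_min_mach hm fun i => lamOf ε (G i) i a).choose
  Function.update G i (arrM ε s (G i) (disp ε (G i) i a))

/-- A machine to which no job has been dispatched yet. -/
def Mach.init : Mach m := ⟨0, none, 0, 0, 0⟩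

/-- The state in slot `t`, from the state before time `t` and the jobs released at time `t`. -/
def slotOf (hm : 0 < m) (ε : ℝ) (t : ℕ) (G : Fin m → Mach m) (as : List (Job m)) :
    Fin m → Mach m :=
  fun i => startM (as.foldl (arrive hm ε t) G i)

/-- The state before the arrivals at time `t`, for the arrival sequence `arr`. -/
def pre (hm : 0 < m) (ε : ℝ) (arr : ℕ → List (Job m)) : ℕ → Fin m → Mach m
  | 0 => fun _ => Mach.init
  | t + 1 => fun i => tickM t (slotOf hm ε t (pre hm ε arr t) (arr t) i)

/-- The state during slot `t`. -/
def slot (hm : 0 < m) (ε : ℝ) (arr : ℕ → List (Job m)) (t : ℕ) : Fin m → Mach m :=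
  slotOf hm ε t (pre hm ε arr t) (arr t)

/-- The jobs of `I` released at time `t`. -/
def arrOf (I : MInstance m) (t : ℕ) : List (Job m) :=
  ((I.J.filter fun j => I.r j = t).sort (· ≤ ·)).map
    fun j => ⟨j, I.r j, I.w j, fun i => I.p i j, 0, 0⟩

/-- `j` is among the rejected jobs in slot `s`. -/
def rejAt (hm : 0 < m) (ε : ℝ) (I : MInstance m) (j s : ℕ) : Prop :=
  ∃ i, ∃ a ∈ (slot hm ε (arrOf I) s i).rej, a.id = j

open Classical in
/-- The algorithm. -/
def alg (hm : 0 < m) (ε : ℝ) (I : MInstance m) : MOutput m where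
  sched i t := (slot hm ε (arrOf I) t i).run.map fun x => x.1.j.id
  rej j := if h : ∃ s, rejAt hm ε I j s then some (Nat.find h) else none

theorem pre_congr (hm : 0 < m) (ε : ℝ) {arr₁ arr₂ : ℕ → List (Job m)} {t : ℕ}
    (h : ∀ u < t, arr₁ u = arr₂ u) : pre hm ε arr₁ t = pre hm ε arr₂ t := by
  induction t with
  | zero => rfl
  | succ t ih =>
    simp only [pre]
    rw [ih fun u hu => h u (by omega), h t (by omega)]

theorem slot_congr (hm : 0 < m) (ε : ℝ) {arr₁ arr₂ : ℕ → List (Job m)} {t : ℕ}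
    (h : ∀ u ≤ t, arr₁ u = arr₂ u) : slot hm ε arr₁ t = slot hm ε arr₂ t := by
  unfold slot
  rw [pre_congr hm ε fun u hu => h u (by omega), h t le_rfl]

theorem arrOf_congr {I₁ I₂ : MInstance m} {t : ℕ} (h : MAgreeUpTo I₁ I₂ t) :
    ∀ u ≤ t, arrOf I₁ u = arrOf I₂ u := by
  intro u hu
  obtain ⟨h1, h2⟩ := h
  have key : I₁.J.filter (fun j => I₁.r j = u) = I₂.J.filter (fun j => I₂.r j = u) := by
    ext j
    have hj := congrArg (fun s => j ∈ s) h1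
    simp only [mem_filter, eq_iff_iff] at hj ⊢
    constructor
    · rintro ⟨ha, hb⟩
      have hc := hj.1 ⟨ha, by omega⟩
      have hd := (h2 j (by simp only [mem_filter]; exact ⟨ha, by omega⟩)).1
      exact ⟨hc.1, by omega⟩
    · rintro ⟨ha, hb⟩
      have hc := hj.2 ⟨ha, by omega⟩
      have hd := (h2 j (by simp only [mem_filter]; exact hc)).1
      exact ⟨hc.1, by omega⟩
  unfold arrOf
  rw [← key]
  refine List.map_congr_left fun j hj => ?_
  simp only [mem_sort, mem_filter] at hj
  obtain ⟨ha, hb, hc⟩ := h2 j (by simp only [mem_filter]; exact ⟨hj.1, by omega⟩)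
  simp only [ha, hb, hc]

theorem alg_online (hm : 0 < m) (ε : ℝ) : MOnline (alg hm ε) := by
  intro I₁ I₂ t h
  have hs : ∀ u ≤ t, slot hm ε (arrOf I₁) u = slot hm ε (arrOf I₂) u := fun u hu =>
    slot_congr hm ε fun x hx => arrOf_congr h x (by omega)
  have hr : ∀ j, ∀ u ≤ t, (rejAt hm ε I₁ j u ↔ rejAt hm ε I₂ j u) := fun j u hu => by
    unfold rejAt; rw [hs u hu]
  have hiff : ∀ (I : MInstance m) j s, (alg hm ε I).rej j = some s ↔
      rejAt hm ε I j s ∧ ∀ u < s, ¬ rejAt hm ε I j u := by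
    classical
    intro I j s
    simp only [alg]
    split_ifs with hh
    · simp only [Option.some.injEq]
      convert Nat.find_eq_iff hh
    · simp only [false_iff, not_and]
      exact fun h1 => absurd ⟨s, h1⟩ hh
  refine ⟨fun i u hu => ?_, fun j s hst => ?_⟩
  · simp only [alg, hs u hu]
  · rw [hiff, hiff, hr j s hst]
    refine and_congr_right fun _ => forall_congr' fun u => ?_
    constructor
    · intro h1 h2; rw [← hr j u (by omega)]; exact h1 h2
    · intro h1 h2; rw [hr j u (by omega)]; exact h1 h2

/-! ### The potentials and their invariants -/

theorem qW_cons (a : Ent m) (q : Multiset (Ent m)) : qW (a ::ₘ q) = a.v + qW q := by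
  simp [qW]

theorem qP_cons (a : Ent m) (q : Multiset (Ent m)) : qP (a ::ₘ q) = a.j.p + qP q := by
  simp [qP]

theorem qPhi_cons (a : Ent m) (q : Multiset (Ent m)) (w : ℝ) (p : ℕ) :
    qPhi (a ::ₘ q) w p = min (a.v * p) (w * a.j.p) + qPhi q w p := by
  simp [qPhi]

theorem qPsi_cons (a : Ent m) (q : Multiset (Ent m)) :
    qPsi (a ::ₘ q) = qPsi q + a.v * a.j.p + qPhi q a.v a.j.p := by
  have h : (q.map fun x => min (a.v * (x.j.p : ℝ)) (x.v * (a.j.p : ℝ))).sum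
      = qPhi q a.v a.j.p := by
    simp only [qPhi, min_comm]
  have h' : (q.map fun x => min (x.v * (a.j.p : ℝ)) (a.v * (x.j.p : ℝ))).sum
      = qPhi q a.v a.j.p := rfl
  simp only [qPsi, Multiset.map_cons, Multiset.sum_cons, min_self, Multiset.sum_map_add, h, h']
  ring

theorem qPhi_eq_of_min (a : Ent m) (q : Multiset (Ent m)) (ha : 0 < a.j.p)
    (hq : ∀ e ∈ q, 0 < e.j.p) (h : ∀ e ∈ q, a.v / a.j.p ≤ e.v / e.j.p) :
    qPhi q a.v a.j.p = a.v * qP q := by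
  unfold qPhi qP
  rw [Nat.cast_multiset_sum, Multiset.map_map, ← Multiset.sum_map_mul_left]
  refine congrArg _ (Multiset.map_congr rfl fun e he => ?_)
  have h1 : (0 : ℝ) < a.j.p := by exact_mod_cast ha
  have h2 : (0 : ℝ) < e.j.p := by exact_mod_cast hq e he
  have := h e he
  rw [div_le_div_iff₀ h1 h2] at this
  simp [min_eq_right this]

theorem qPhi_eq_of_max (a : Ent m) (q : Multiset (Ent m)) (ha : 0 < a.j.p)
    (hq : ∀ e ∈ q, 0 < e.j.p) (h : ∀ e ∈ q, e.v / e.j.p ≤ a.v / a.j.p) :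
    qPhi q a.v a.j.p = a.j.p * qW q := by
  unfold qPhi qW
  rw [← Multiset.sum_map_mul_left]
  refine congrArg _ (Multiset.map_congr rfl fun e he => ?_)
  have h1 : (0 : ℝ) < a.j.p := by exact_mod_cast ha
  have h2 : (0 : ℝ) < e.j.p := by exact_mod_cast hq e he
  have := h e he
  rw [div_le_div_iff₀ h2 h1] at this
  rw [min_eq_left this, mul_comm]

theorem qPhi_le_P (q : Multiset (Ent m)) (w : ℝ) (p : ℕ) : qPhi q w p ≤ w * qP q := by
  unfold qPhi qP
  rw [Nat.cast_multiset_sum, Multiset.map_map, ← Multiset.sum_map_mul_left]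
  exact Multiset.sum_map_le_sum_map _ _ fun e _ => min_le_right _ _

theorem qPhi_le_W (q : Multiset (Ent m)) (w : ℝ) (p : ℕ) : qPhi q w p ≤ p * qW q := by
  unfold qPhi qW
  rw [← Multiset.sum_map_mul_left]
  refine Multiset.sum_map_le_sum_map _ _ fun e _ => ?_
  rw [mul_comm]; exact min_le_left _ _

theorem qPhi_nonneg (q : Multiset (Ent m)) (w : ℝ) (p : ℕ) (hw : 0 ≤ w)
    (hq : ∀ e ∈ q, 0 ≤ e.v) : 0 ≤ qPhi q w p := by
  refine Multiset.sum_nonneg ?_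
  simp only [Multiset.mem_map, forall_exists_index, and_imp]
  rintro x e he rfl
  have := hq e he
  exact le_min (by positivity) (by positivity)

theorem qW_nonneg (q : Multiset (Ent m)) (hq : ∀ e ∈ q, 0 ≤ e.v) : 0 ≤ qW q := by
  refine Multiset.sum_nonneg ?_
  simp only [Multiset.mem_map, forall_exists_index, and_imp]
  rintro x e he rfl
  exact hq e he

theorem qPsi_nonneg (q : Multiset (Ent m)) (hq : ∀ e ∈ q, 0 ≤ e.v) : 0 ≤ qPsi q := by
  induction q using Multiset.induction_on with
  | empty => simp [qPsi]
  | cons a q ih =>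
    rw [qPsi_cons]
    have h1 := ih fun e he => hq e (Multiset.mem_cons_of_mem he)
    have h2 := hq a (Multiset.mem_cons_self a q)
    have h3 := qPhi_nonneg q a.v a.j.p h2 fun e he => hq e (Multiset.mem_cons_of_mem he)
    positivity

theorem Mach.Phi_le_W (M : Mach m) (w : ℝ) (p : ℕ) : M.Phi w p ≤ p * (M.rz + qW M.q) := by
  have h1 := qPhi_le_W M.q w p
  have h2 := min_le_left (M.rz * (p : ℝ)) (w * M.rem)
  unfold Mach.Phi; linarith

theorem Mach.Phi_le_P (M : Mach m) (w : ℝ) (p : ℕ) :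
    M.Phi w p ≤ w * ((M.rem + qP M.q : ℕ) : ℝ) := by
  have h1 := qPhi_le_P M.q w p
  have h2 := min_le_right (M.rz * (p : ℝ)) (w * M.rem)
  unfold Mach.Phi; push_cast; linarith

/-- Elementary bounds maintained in every machine state. -/
structure Wf (M : Mach m) : Prop where
  q : ∀ e ∈ M.q, e.j.w / 2 ≤ e.v ∧ e.v ≤ e.j.w
  run : ∀ e n, M.run = some (e, n) → 0 < n ∧ n ≤ e.j.p ∧ 0 ≤ e.v ∧ e.v ≤ e.j.w
  log : ∀ d ∈ M.log, 0 ≤ d.1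
  all : ∀ a ∈ M.all, 0 < a.p ∧ 0 < a.w

/-- Contribution of the logged drops to the dual variable of slot `t`: a drop `(x, R, s)`
counts with weight `x` in the `⌊R / 4⌋` slots from `s` on. -/
def Vt (t : ℕ) (log : Multiset (ℝ × ℕ × ℕ)) : ℝ :=
  (log.map fun d => if d.2.2 ≤ t ∧ t < d.2.2 + d.2.1 / 4 then d.1 else 0).sum

/-- Upper bound for the contribution of the logged drops, summed over all slots. -/
def VC (log : Multiset (ℝ × ℕ × ℕ)) : ℝ := (log.map fun d => d.1 * (d.2.1 : ℝ) / 4).sum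

/-- Cost still to be paid: the residual weighted waiting times if no further job arrives, the
contribution of the drops, and a reserve `w * p * O(1 / ε)` for each unfinished job, which
pays for its execution and for the waiting of jobs arriving while it runs. -/
def Pot (ε : ℝ) (M : Mach m) : ℝ :=
  M.rem * qW M.q + qPsi M.q + VC M.log + M.rem * (2 / ε * M.rz + M.rw)
    + (1 + 2 / ε) * (M.q.map fun e => e.j.w * (e.j.p : ℝ)).sum

/-- Rejected weight, plus the weight dropped from unfinished jobs (doubled while waiting). -/
def rejPot (M : Mach m) : ℝ :=
  (M.rej.map fun a => a.w).sum + (M.q.map fun e => 2 * (e.j.w - e.v)).sum + (M.rw - M.rz)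

/-- Weighted flow-time up to time `u` of the jobs that are not rejected. -/
def flowPot (u : ℕ) (M : Mach m) : ℝ :=
  (M.done.map fun d => d.1.w * ((d.2 : ℝ) - d.1.r)).sum
    + (M.q.map fun e => e.j.w * ((u : ℝ) - e.j.r)).sum
    + M.run.elim 0 fun x => x.1.j.w * ((u : ℝ) - x.1.j.r)

/-- The dual constraint for slot `t` as maintained over time, where `X` is the left-hand side,
`y` the time elapsed so far (times `w`) and `Y` the allowance at time `t`: either the
interaction of the earlier state is still accounted for by the present state, or a drop whose
contribution ends before `t` has shown that it is at most `Y`. -/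
def Feas (X y Y w : ℝ) (p t : ℕ) (M : Mach m) : Prop :=
  X ≤ M.Phi w p + y + p * Vt t M.log ∨ X ≤ p * Vt t M.log + Y

theorem Vt_cons (t : ℕ) (d : ℝ × ℕ × ℕ) (log : Multiset (ℝ × ℕ × ℕ)) :
    Vt t (d ::ₘ log) = (if d.2.2 ≤ t ∧ t < d.2.2 + d.2.1 / 4 then d.1 else 0) + Vt t log := by
  simp [Vt]

theorem VC_cons (d : ℝ × ℕ × ℕ) (log : Multiset (ℝ × ℕ × ℕ)) :
    VC (d ::ₘ log) = d.1 * (d.2.1 : ℝ) / 4 + VC log := by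
  simp [VC]

theorem Vt_nonneg (t : ℕ) (log : Multiset (ℝ × ℕ × ℕ)) (h : ∀ d ∈ log, 0 ≤ d.1) :
    0 ≤ Vt t log := by
  refine Multiset.sum_nonneg ?_
  simp only [Multiset.mem_map, forall_exists_index, and_imp]
  rintro x d hd rfl
  split_ifs
  · exact h d hd
  · exact le_rfl

theorem VC_nonneg (log : Multiset (ℝ × ℕ × ℕ)) (h : ∀ d ∈ log, 0 ≤ d.1) : 0 ≤ VC log := by
  refine Multiset.sum_nonneg ?_
  simp only [Multiset.mem_map, forall_exists_index, and_imp]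
  rintro x d hd rfl
  have := h d hd
  positivity

theorem sum_Vt_le (T : ℕ) (log : Multiset (ℝ × ℕ × ℕ)) (h : ∀ d ∈ log, 0 ≤ d.1) :
    ∑ t ∈ range T, Vt t log ≤ VC log := by
  induction log using Multiset.induction_on with
  | empty => simp [Vt, VC]
  | cons d log ih =>
    simp only [Vt_cons, VC_cons, sum_add_distrib]
    refine add_le_add ?_ (ih fun e he => h e (Multiset.mem_cons_of_mem he))
    have h0 := h d (Multiset.mem_cons_self d log)
    rw [← sum_filter, sum_const, nsmul_eq_mul]
    have hc : #{t ∈ range T | d.2.2 ≤ t ∧ t < d.2.2 + d.2.1 / 4} ≤ d.2.1 / 4 := by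
      calc _ ≤ #(Ico d.2.2 (d.2.2 + d.2.1 / 4)) := card_le_card fun t ht => by
            simp only [mem_filter] at ht; simp only [mem_Ico]; exact ht.2
        _ = _ := by simp
    have hc' : (#{t ∈ range T | d.2.2 ≤ t ∧ t < d.2.2 + d.2.1 / 4} : ℝ) ≤ (d.2.1 : ℝ) / 4 :=
      (Nat.cast_le.2 hc).trans (by simpa using Nat.cast_div_le (α := ℝ) (m := d.2.1) (n := 4))
    nlinarith

/-- Dual feasibility survives a drop: a drop that is still active at `t` compensates the loss
of interaction, while one that is no longer active bounds the interaction by `w * R`. -/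
theorem Feas.drop {X y Y w : ℝ} {p t : ℕ} {M M' : Mach m} {x : ℝ} {R s : ℕ}
    (h : Feas X y Y w p t M) (hlog : M'.log = (x, R, s) ::ₘ M.log)
    (h1 : M.Phi w p ≤ M'.Phi w p + x * p) (h2 : M.Phi w p ≤ w * R) (hw : 0 ≤ w) (hx : 0 ≤ x)
    (hst : s ≤ t) (hY : w * (4 * ((t : ℝ) - s) + 3) + y ≤ Y) : Feas X y Y w p t M' := by
  unfold Feas at *
  rw [hlog, Vt_cons]
  simp only
  split_ifs with ha
  · have : 0 ≤ p * x := by positivity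
    rcases h with h | h
    · left; linarith
    · right; linarith
  · right
    rcases h with h | h
    · have hR : R + 4 * s ≤ 4 * t + 3 := by omega
      have hR' : (R : ℝ) + 4 * s ≤ 4 * t + 3 := by exact_mod_cast hR
      have : w * R ≤ w * (4 * ((t : ℝ) - s) + 3) := mul_le_mul_of_nonneg_left (by linarith) hw
      linarith
    · linarith

/-! ### Dropping weight -/

theorem Mach.mem_all_q {M : Mach m} {e : Ent m} (h : e ∈ M.q) : e.j ∈ M.all := by
  simp only [Mach.all, Multiset.mem_add, Multiset.mem_map]
  exact Or.inl (Or.inl (Or.inl ⟨e, h, rfl⟩))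

theorem Mach.mem_all_run {M : Mach m} {e : Ent m} {n : ℕ} (h : M.run = some (e, n)) :
    e.j ∈ M.all := by
  simp [Mach.all, h]

theorem Mach.mem_all_rej {M : Mach m} {a : Job m} (h : a ∈ M.rej) : a ∈ M.all := by
  simp only [Mach.all, Multiset.mem_add]
  exact Or.inl (Or.inr h)

theorem Mach.mem_all_done {M : Mach m} {d : Job m × ℕ} (h : d ∈ M.done) : d.1 ∈ M.all := by
  simp only [Mach.all, Multiset.mem_add, Multiset.mem_map]
  exact Or.inr ⟨d, h, rfl⟩

theorem Wf.q_nonneg {M : Mach m} (h : Wf M) : ∀ e ∈ M.q, 0 ≤ e.v := fun e he => by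
  have h1 := (h.q e he).1
  have h2 := (h.all _ (M.mem_all_q he)).2
  linarith

theorem Wf.q_pos {M : Mach m} (h : Wf M) : ∀ e ∈ M.q, 0 < e.j.p := fun _ he =>
  (h.all _ (M.mem_all_q he)).1

theorem Wf.rz_nonneg {M : Mach m} (h : Wf M) : 0 ≤ M.rz ∧ M.rz ≤ M.rw := by
  rcases hr : M.run with _ | ⟨e, n⟩
  · simp [Mach.rz, Mach.rw, hr]
  · have := h.run e n hr
    simp only [Mach.rz, Mach.rw, hr, Option.elim_some]
    exact ⟨this.2.2.1, this.2.2.2⟩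

/-- What is preserved when weight is dropped or a waiting job is started at time `s`. -/
structure Keeps (s : ℕ) (M M' : Mach m) : Prop where
  all : M'.all = M.all
  done : M'.done = M.done
  wf : Wf M'
  log : M.log ≤ M'.log
  rej : M.rej ≤ M'.rej
  flow : ∀ u, (∀ a ∈ M.all, a.r ≤ u) → flowPot u M' ≤ flowPot u M
  feas : ∀ X y Y w p t, 0 ≤ w → s ≤ t → w * (4 * ((t : ℝ) - s) + 3) + y ≤ Y →
    Feas X y Y w p t M → Feas X y Y w p t M'

theorem Keeps.refl (s : ℕ) {M : Mach m} (h : Wf M) : Keeps s M M :=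
  ⟨rfl, rfl, h, le_rfl, le_rfl, fun _ _ => le_rfl, fun _ _ _ _ _ _ _ _ _ h => h⟩

theorem Keeps.trans {s : ℕ} {M₁ M₂ M₃ : Mach m} (h : Keeps s M₁ M₂) (h' : Keeps s M₂ M₃) :
    Keeps s M₁ M₃ where
  all := h'.all.trans h.all
  done := h'.done.trans h.done
  wf := h'.wf
  log := h.log.trans h'.log
  rej := h.rej.trans h'.rej
  flow u hu := (h'.flow u (by rwa [h.all])).trans (h.flow u hu)
  feas X y Y w p t hw hs hY hf := h'.feas X y Y w p t hw hs hY (h.feas X y Y w p t hw hs hY hf)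

/-- A waiting job of lowest density is rejected. -/
theorem qdrop_full (s : ℕ) (M : Mach m) (hM : Wf M) (c : Ent m) (q' : Multiset (Ent m))
    (hq : M.q = c ::ₘ q') (hmin : ∀ e ∈ q', c.v / c.j.p ≤ e.v / e.j.p) {ε : ℝ} (hε : 0 < ε) :
    let M' : Mach m := { M with q := q', rej := c.j ::ₘ M.rej,
                                log := (c.v, M.rem + qP M.q, s) ::ₘ M.log }
    Keeps s M M' ∧ Pot ε M' + 3 / 4 * c.v * qP M'.q ≤ Pot ε M ∧
      rejPot M' = rejPot M + 2 * (c.v - c.j.w / 2) := by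
  intro M'
  have hcq : c ∈ M.q := by rw [hq]; exact Multiset.mem_cons_self _ _
  have hsub : ∀ e ∈ q', e ∈ M.q := fun e he => by rw [hq]; exact Multiset.mem_cons_of_mem he
  have hc0 := hM.q_nonneg c hcq
  have hcp := hM.q_pos c hcq
  have hcw := (hM.all _ (M.mem_all_q hcq)).2
  have hall : M'.all = M.all := by
    simp only [Mach.all, M', hq, Multiset.map_cons, Multiset.cons_add, Multiset.add_cons]
  refine ⟨⟨hall, rfl, ⟨fun e he => hM.q e (hsub e he), hM.run, ?_, by rw [hall]; exact hM.all⟩,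
    Multiset.le_cons_self _ _, Multiset.le_cons_self _ _, ?_, ?_⟩, ?_, ?_⟩
  · intro d hd
    rcases Multiset.mem_cons.1 hd with rfl | hd
    · exact hc0
    · exact hM.log d hd
  · intro u hu
    have h1 : (c.j.r : ℝ) ≤ u := by exact_mod_cast hu _ (M.mem_all_q hcq)
    have h2 : 0 ≤ c.j.w * ((u : ℝ) - c.j.r) := mul_nonneg hcw.le (by linarith)
    simp only [flowPot, M', hq, Multiset.map_cons, Multiset.sum_cons]
    linarith
  · intro X y Y w p t hw hst hY hf
    refine hf.drop (x := c.v) (R := M.rem + qP M.q) (s := s) rfl ?_ (M.Phi_le_P w p) hw hc0 hst hY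
    have := min_le_left (c.v * (p : ℝ)) (w * c.j.p)
    simp only [Mach.Phi, M', hq, qPhi_cons]
    simp only [Mach.rz, Mach.rem]
    linarith
  · have h1 : qPsi M.q = qPsi q' + c.v * c.j.p + c.v * qP q' := by
      rw [hq, qPsi_cons, qPhi_eq_of_min c q' hcp (fun e he => hM.q_pos e (hsub e he)) hmin]
    have h2 : 0 ≤ (1 + 2 / ε) * (c.j.w * c.j.p) := by positivity
    have h3 : 0 ≤ c.v * c.j.p := by positivity
    have h4 : 0 ≤ c.v * M.rem := by positivity
    have h5 : M'.rem = M.rem := rfl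
    have h6 : M'.rz = M.rz := rfl
    have h7 : M'.rw = M.rw := rfl
    unfold Pot
    rw [h5, h6, h7, h1]
    simp only [M', VC_cons, hq, qW_cons, qP_cons, Multiset.map_cons, Multiset.sum_cons]
    push_cast
    nlinarith
  · have h6 : M'.rz = M.rz := rfl
    have h7 : M'.rw = M.rw := rfl
    unfold rejPot
    rw [h6, h7]
    simp only [M', hq, Multiset.map_cons, Multiset.sum_cons]
    ring

/-- A waiting job of lowest density loses residual weight `b`. -/
theorem qdrop_part (s : ℕ) (M : Mach m) (hM : Wf M) (c : Ent m) (q' : Multiset (Ent m))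
    (hq : M.q = c ::ₘ q') (hmin : ∀ e ∈ q', c.v / c.j.p ≤ e.v / e.j.p) {ε : ℝ}
    {b : ℝ} (hb : 0 ≤ b) (hcb : c.j.w / 2 < c.v - b) :
    let M' : Mach m := { M with q := ⟨c.j, c.v - b⟩ ::ₘ q',
                                log := (b, M.rem + qP M.q, s) ::ₘ M.log }
    Keeps s M M' ∧ Pot ε M' + 3 / 4 * b * qP M'.q ≤ Pot ε M ∧
      rejPot M' = rejPot M + 2 * b ∧ qP M'.q = qP M.q ∧
      ∀ w p, qPhi M'.q w p ≤ qPhi M.q w p := by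
  intro M'
  have hcq : c ∈ M.q := by rw [hq]; exact Multiset.mem_cons_self _ _
  have hsub : ∀ e ∈ q', e ∈ M.q := fun e he => by rw [hq]; exact Multiset.mem_cons_of_mem he
  have hc0 := hM.q_nonneg c hcq
  have hcp := hM.q_pos c hcq
  have hcw := (hM.all _ (M.mem_all_q hcq)).2
  have hall : M'.all = M.all := by
    simp only [Mach.all, M', hq, Multiset.map_cons]
  have hP : qP M'.q = qP M.q := by simp only [M', hq, qP_cons]
  refine ⟨⟨hall, rfl, ⟨?_, hM.run, ?_, by rw [hall]; exact hM.all⟩,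
    Multiset.le_cons_self _ _, le_rfl, ?_, ?_⟩, ?_, ?_, hP, ?_⟩
  · intro e he
    rcases Multiset.mem_cons.1 he with rfl | he
    · have := (hM.q c hcq).2
      exact ⟨hcb.le, by simp only; linarith⟩
    · exact hM.q e (hsub e he)
  · intro d hd
    rcases Multiset.mem_cons.1 hd with rfl | hd
    · exact hb
    · exact hM.log d hd
  · intro u hu
    simp only [flowPot, M', hq, Multiset.map_cons, Multiset.sum_cons]
    exact le_rfl
  · intro X y Y w p t hw hst hY hf
    refine hf.drop (x := b) (R := M.rem + qP M.q) (s := s) rfl ?_ (M.Phi_le_P w p) hw hb hst hY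
    have : min (c.v * (p : ℝ)) (w * c.j.p) ≤ min ((c.v - b) * (p : ℝ)) (w * c.j.p) + b * p := by
      rw [← min_add_add_right]
      have : 0 ≤ b * p := by positivity
      exact min_le_min (by linarith) (by linarith)
    simp only [Mach.Phi, M', hq, qPhi_cons]
    simp only [Mach.rz, Mach.rem]
    linarith
  · have h1 : qPsi M.q = qPsi q' + c.v * c.j.p + c.v * qP q' := by
      rw [hq, qPsi_cons, qPhi_eq_of_min c q' hcp (fun e he => hM.q_pos e (hsub e he)) hmin]
    have h1' : qPsi M'.q = qPsi q' + (c.v - b) * c.j.p + (c.v - b) * qP q' := by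
      simp only [M', qPsi_cons]
      rw [qPhi_eq_of_min ⟨c.j, c.v - b⟩ q' hcp (fun e he => hM.q_pos e (hsub e he))
        fun e he => le_trans ?_ (hmin e he)]
      exact div_le_div_of_nonneg_right (by simp only; linarith) (by positivity)
    have h4 : 0 ≤ b * M.rem := by positivity
    have h5 : M'.rem = M.rem := rfl
    have h6 : M'.rz = M.rz := rfl
    have h7 : M'.rw = M.rw := rfl
    unfold Pot
    rw [h5, h6, h7, h1, h1']
    simp only [M', VC_cons, hq, qW_cons, qP_cons, Multiset.map_cons, Multiset.sum_cons]
    push_cast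
    nlinarith
  · have h6 : M'.rz = M.rz := rfl
    have h7 : M'.rw = M.rw := rfl
    unfold rejPot
    rw [h6, h7]
    simp only [M', hq, Multiset.map_cons, Multiset.sum_cons]
    ring
  · intro w p
    simp only [M', hq, qPhi_cons]
    have : 0 ≤ b * p := by positivity
    gcongr
    linarith

/-- Dropping weight `b` from the queue lowers the potential by at least `3/4 * b` times the
work that remains in the queue. -/
theorem dropQ_spec (s : ℕ) {ε : ℝ} (hε : 0 < ε) (k : ℕ) : ∀ (b : ℝ) (M : Mach m), Wf M → 0 ≤ b →
    Multiset.card M.q ≤ k →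
    Keeps s M (dropQ s k b M) ∧
      Pot ε (dropQ s k b M) + 3 / 4 * b * qP (dropQ s k b M).q ≤ Pot ε M ∧
      rejPot (dropQ s k b M) ≤ rejPot M + 2 * b ∧
      qP (dropQ s k b M).q ≤ qP M.q ∧
      (∀ w p, 0 ≤ w → qPhi (dropQ s k b M).q w p ≤ qPhi M.q w p) ∧
      (dropQ s k b M).run = M.run ∧
      ∀ e ∈ (dropQ s k b M).q, ∃ e' ∈ M.q, e'.j = e.j := by
  have hnil : ∀ (b : ℝ) (M : Mach m), Wf M → 0 ≤ b → M.q = 0 →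
      Keeps s M M ∧ Pot ε M + 3 / 4 * b * qP M.q ≤ Pot ε M ∧
      rejPot M ≤ rejPot M + 2 * b ∧ qP M.q ≤ qP M.q ∧
      (∀ w p, 0 ≤ w → qPhi M.q w p ≤ qPhi M.q w p) ∧ M.run = M.run ∧
      ∀ e ∈ M.q, ∃ e' ∈ M.q, e'.j = e.j := by
    intro b M hM hb h0
    refine ⟨Keeps.refl s hM, ?_, by linarith, le_rfl, fun _ _ _ => le_rfl, rfl,
      fun e he => ⟨e, he, rfl⟩⟩
    simp [h0, qP]
  induction k with
  | zero =>
    intro b M hM hb hk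
    exact hnil b M hM hb (by simpa using hk)
  | succ k ih =>
    intro b M hM hb hk
    by_cases h0 : M.q = 0
    · have : dropQ s (k + 1) b M = M := by simp [dropQ, h0]
      rw [this]; exact hnil b M hM hb h0
    obtain ⟨c, hc⟩ : ∃ c, c = (exists_min_dens M.q h0).choose := ⟨_, rfl⟩
    obtain ⟨hq, hmin⟩ := (exists_min_dens M.q h0).choose_spec
    rw [← hc] at hq hmin
    obtain ⟨c, q'⟩ := c
    simp only at hq hmin
    have hcq : c ∈ M.q := by rw [hq]; exact Multiset.mem_cons_self _ _
    by_cases hcb : c.v - b ≤ c.j.w / 2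
    · have hd : dropQ s (k + 1) b M = dropQ s k (b - (c.v - c.j.w / 2))
          { M with q := q', rej := c.j ::ₘ M.rej,
                   log := (c.v, M.rem + qP M.q, s) ::ₘ M.log } := by
        simp only [dropQ, dif_neg h0, ← hc, if_pos hcb]
      obtain ⟨h1, h2, h3⟩ := qdrop_full s M hM c q' hq hmin hε
      rw [hd]
      set M₁ : Mach m := { M with q := q', rej := c.j ::ₘ M.rej,
                                  log := (c.v, M.rem + qP M.q, s) ::ₘ M.log } with hM₁
      obtain ⟨g1, g2, g3, g4, g5, g6, g7⟩ := ih (b - (c.v - c.j.w / 2)) M₁ h1.wf (by linarith)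
        (by rw [hq, Multiset.card_cons] at hk; simp only [hM₁]; omega)
      have hP : qP M₁.q ≤ qP M.q := by simp only [hM₁, hq, qP_cons]; omega
      have hcv := hM.q_nonneg c hcq
      have hcw := (hM.all _ (M.mem_all_q hcq)).2
      refine ⟨h1.trans g1, ?_, by linarith, g4.trans hP, fun w p hw => (g5 w p hw).trans ?_, g6,
        fun e he => ?_⟩
      · set M₂ := dropQ s k (b - (c.v - c.j.w / 2)) M₁
        have a1 : (qP M₂.q : ℝ) ≤ qP M₁.q := by exact_mod_cast g4
        have a2 : (0 : ℝ) ≤ qP M₂.q := by positivity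
        nlinarith [mul_le_mul_of_nonneg_left a1 hcv, mul_nonneg hcw.le a2]
      · simp only [hM₁, hq, qPhi_cons]
        have : 0 ≤ min (c.v * (p : ℝ)) (w * c.j.p) := le_min (by positivity) (by positivity)
        linarith
      · obtain ⟨e', he', h⟩ := g7 e he
        exact ⟨e', by rw [hq]; exact Multiset.mem_cons_of_mem he', h⟩
    · have hd : dropQ s (k + 1) b M = { M with q := ⟨c.j, c.v - b⟩ ::ₘ q',
                                               log := (b, M.rem + qP M.q, s) ::ₘ M.log } := by
        simp only [dropQ, dif_neg h0, ← hc, if_neg hcb]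
      rw [hd]
      obtain ⟨h1, h2, h3, h4, h5⟩ := qdrop_part (ε := ε) s M hM c q' hq hmin hb (by linarith)
      refine ⟨h1, h2, h3.le, h4.le, fun w p _ => h5 w p, rfl, fun e he => ?_⟩
      rcases Multiset.mem_cons.1 he with rfl | he
      · exact ⟨c, hcq, rfl⟩
      · exact ⟨e, by rw [hq]; exact Multiset.mem_cons_of_mem he, rfl⟩

/-- Dropping weight `ε * w` from the running job also pays for the waiting time `rem * w` which
that job causes to an arriving job of weight `w`. -/
theorem dropRun_spec (s : ℕ) {ε : ℝ} (hε : 0 < ε) (hε1 : ε ≤ 1) (w : ℝ) (hw : 0 ≤ w)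
    (M : Mach m) (hM : Wf M) :
    Keeps s M (dropRun s (ε * w) M) ∧ (dropRun s (ε * w) M).q = M.q ∧
      Pot ε (dropRun s (ε * w) M) + (dropRun s (ε * w) M).rem * w
        ≤ Pot ε M + 1 / 4 * (ε * w) * qP M.q ∧
      rejPot (dropRun s (ε * w) M) ≤ rejPot M + ε * w ∧
      ∀ e n, (dropRun s (ε * w) M).run = some (e, n) →
        ∃ e', M.run = some (e', n) ∧ e'.j = e.j := by
  have hb : 0 ≤ ε * w := by positivity
  have hi : 1 ≤ 1 / ε := by rw [le_div_iff₀ hε]; linarith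
  rcases hr : M.run with _ | ⟨e, n⟩
  · have : dropRun s (ε * w) M = M := by simp [dropRun, hr]
    rw [this]
    refine ⟨Keeps.refl s hM, rfl, ?_, by linarith, fun e n h => by simp [hr] at h⟩
    have h0 : M.rem = 0 := by simp [Mach.rem, hr]
    rw [h0]; simp; positivity
  obtain ⟨hn, hnp, hz, hzw⟩ := hM.run e n hr
  have hejw := (hM.all _ (M.mem_all_run hr)).2
  have hrem : M.rem = n := by simp [Mach.rem, hr]
  have hrz : M.rz = e.v := by simp [Mach.rz, hr]
  have hrw : M.rw = e.j.w := by simp [Mach.rw, hr]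
  have hW := qW_nonneg _ hM.q_nonneg
  by_cases hk : e.v ≤ ε * w
  · obtain ⟨M', hM'⟩ : ∃ M' : Mach m, M' = { M with
        run := none, rej := e.j ::ₘ M.rej, log := (e.v, n + qP M.q, s) ::ₘ M.log } := ⟨_, rfl⟩
    have hd : dropRun s (ε * w) M = M' := by simp [dropRun, hr, hk, hM']
    rw [hd]
    have hall : M'.all = M.all := by
      simp only [Mach.all, hM', hr, Option.elim_none, Option.elim_some]
      simp only [← Multiset.singleton_add, add_zero]
      ac_rfl
    have hrem' : M'.rem = 0 := by simp [Mach.rem, hM']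
    have hrz' : M'.rz = 0 := by simp [Mach.rz, hM']
    have hrw' : M'.rw = 0 := by simp [Mach.rw, hM']
    have hq' : M'.q = M.q := by simp [hM']
    have hl' : M'.log = (e.v, n + qP M.q, s) ::ₘ M.log := by simp [hM']
    refine ⟨⟨hall, by simp [hM'], ⟨by rw [hq']; exact hM.q, fun _ _ h => by simp [hM'] at h, ?_,
      by rw [hall]; exact hM.all⟩, by rw [hl']; exact Multiset.le_cons_self _ _,
      by rw [hM']; exact Multiset.le_cons_self _ _, ?_, ?_⟩, hq', ?_, ?_,
      fun _ _ h => by simp [hM'] at h⟩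
    · rw [hl']
      intro d hd
      rcases Multiset.mem_cons.1 hd with rfl | hd
      · exact hz
      · exact hM.log d hd
    · intro u hu
      have h1 : (e.j.r : ℝ) ≤ u := by exact_mod_cast hu _ (M.mem_all_run hr)
      have h2 : 0 ≤ e.j.w * ((u : ℝ) - e.j.r) := mul_nonneg hejw.le (by linarith)
      simp only [flowPot, hM', hr, Option.elim_none, Option.elim_some]
      linarith
    · intro X y Y w p t hw hst hY hf
      refine hf.drop (x := e.v) (R := n + qP M.q) (s := s) hl' ?_
        (by rw [← hrem]; exact M.Phi_le_P w p) hw hz hst hY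
      simp only [Mach.Phi, hrem', hrz', hq', hrz, hrem]
      have := min_le_left (e.v * (p : ℝ)) (w * n)
      simp
      linarith
    · simp only [Pot, hrem', hrz', hrw', hq', hl', hrem, hrz, hrw, VC_cons]
      push_cast
      have h1 : e.v * n * (1 / ε) ≥ e.v * n * 1 := by gcongr
      have h2 : e.v * qP M.q ≤ ε * w * qP M.q := by gcongr
      have h3 : 0 ≤ n * qW M.q := by positivity
      have h4 : 0 ≤ n * e.j.w := by positivity
      have h5 : 0 ≤ e.v * n := by positivity
      have h6 : n * (2 / ε * e.v + e.j.w) = 2 * (e.v * n * (1 / ε)) + n * e.j.w := by ring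
      rw [h6]
      linarith
    · simp only [rejPot, hrz', hrw', hq', hrz, hrw]
      simp only [hM', Multiset.map_cons, Multiset.sum_cons]
      linarith
  · obtain ⟨M', hM'⟩ : ∃ M' : Mach m, M' = { M with
        run := some (⟨e.j, e.v - ε * w⟩, n), log := (ε * w, n + qP M.q, s) ::ₘ M.log } := ⟨_, rfl⟩
    have hd : dropRun s (ε * w) M = M' := by simp [dropRun, hr, hk, hM']
    rw [hd]
    rw [not_le] at hk
    have hall : M'.all = M.all := by
      simp only [Mach.all, hM', hr, Option.elim_some]
    have hrem' : M'.rem = n := by simp [Mach.rem, hM']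
    have hrz' : M'.rz = e.v - ε * w := by simp [Mach.rz, hM']
    have hrw' : M'.rw = e.j.w := by simp [Mach.rw, hM']
    have hq' : M'.q = M.q := by simp [hM']
    have hl' : M'.log = (ε * w, n + qP M.q, s) ::ₘ M.log := by simp [hM']
    refine ⟨⟨hall, by simp [hM'], ⟨by rw [hq']; exact hM.q, ?_, ?_,
      by rw [hall]; exact hM.all⟩, by rw [hl']; exact Multiset.le_cons_self _ _,
      by rw [hM'], ?_, ?_⟩, hq', ?_, ?_, ?_⟩
    · intro e' n' h
      simp only [hM', Option.some.injEq, Prod.mk.injEq] at h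
      obtain ⟨rfl, rfl⟩ := h
      exact ⟨hn, hnp, by simp only; linarith, by simp only; linarith⟩
    · rw [hl']
      intro d hd
      rcases Multiset.mem_cons.1 hd with rfl | hd
      · exact hb
      · exact hM.log d hd
    · intro u hu
      simp only [flowPot, hM', hr, Option.elim_some]
      exact le_rfl
    · intro X y Y w' p t hw hst hY hf
      refine hf.drop (x := ε * w) (R := n + qP M.q) (s := s) hl' ?_
        (by rw [← hrem]; exact M.Phi_le_P w' p) hw hb hst hY
      simp only [Mach.Phi, hrem', hrz', hq', hrz, hrem]
      have : min (e.v * (p : ℝ)) (w' * n)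
          ≤ min ((e.v - ε * w) * (p : ℝ)) (w' * n) + ε * w * p := by
        rw [← min_add_add_right]
        have : 0 ≤ ε * w * p := by positivity
        exact min_le_min (by linarith) (by linarith)
      linarith
    · simp only [Pot, hrem', hrz', hrw', hq', hl', hrem, hrz, hrw, VC_cons]
      push_cast
      have h1 : 2 / ε * (e.v - ε * w) = 2 / ε * e.v - 2 * w := by field_simp
      have h2 : ε * w * n ≤ 1 * w * n := by gcongr
      rw [h1]
      nlinarith
    · simp only [rejPot, hrz', hrw', hq', hrz, hrw]
      simp only [hM']
      linarith
    · intro e' n' h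
      simp only [hM', Option.some.injEq, Prod.mk.injEq] at h
      obtain ⟨rfl, rfl⟩ := h
      exact ⟨e, rfl, rfl⟩

/-! ### Arrival of a job, start of a job and execution of a slot -/

/-- The potential rises by at most `(1 - ε / 2) * a.l` when `a` arrives: the interaction of `a` with
the machine costs `a.l` only up to its own execution, and the dropped weight saves an `ε / 2`
fraction of it. -/
theorem arrM_spec (s : ℕ) {ε : ℝ} (hε : 0 < ε) (hε1 : ε ≤ 1) (M : Mach m) (hM : Wf M)
    (a : Job m) (hw : 0 < a.w) (hp : 0 < a.p) (hr : a.r = s) (hs : ∀ b ∈ M.all, b.r ≤ s)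
    (hl : a.l = 8 / ε * a.w * a.p + M.Phi a.w a.p) :
    let M' := arrM ε s M a
    M'.all = a ::ₘ M.all ∧ Wf M' ∧ M.log ≤ M'.log ∧ M.rej ≤ M'.rej ∧ M'.done = M.done ∧
    Pot ε M' ≤ Pot ε M + (1 - ε / 2) * a.l ∧
    rejPot M' ≤ rejPot M + 3 * ε * a.w ∧
    flowPot s M' ≤ flowPot s M ∧
    (∀ X y Y w p t, 0 ≤ w → s ≤ t → w * (4 * ((t : ℝ) - s) + 3) + y ≤ Y →
      Feas X y Y w p t M → Feas X y Y w p t M') ∧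
    (∀ e ∈ M'.q, e.j = a ∨ ∃ e' ∈ M.q, e'.j = e.j) ∧
    ∀ e n, M'.run = some (e, n) → ∃ e', M.run = some (e', n) ∧ e'.j = e.j := by
  obtain ⟨g1, g2, g3, g4, g5, g6, g7⟩ := dropQ_spec s hε (Multiset.card M.q) (ε * a.w) M hM
    (by positivity) le_rfl
  unfold arrM
  set M₁ := dropQ s (Multiset.card M.q) (ε * a.w) M
  obtain ⟨k1, k2, k3, k4, k5⟩ := dropRun_spec s hε hε1 a.w hw.le M₁ g1.wf
  set M₂ := dropRun s (ε * a.w) M₁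
  have hK := g1.trans k1
  intro M'
  have hall : M'.all = a ::ₘ M.all := by
    rw [← hK.all]
    simp only [Mach.all, M', Mach.ins, Multiset.map_cons, Multiset.cons_add]
  refine ⟨hall, ⟨?_, hK.wf.run, hK.wf.log, ?_⟩, hK.log, hK.rej, hK.done, ?_, ?_, ?_, ?_, ?_, ?_⟩
  · intro e he
    rcases Multiset.mem_cons.1 he with rfl | he
    · exact ⟨by simp only; linarith, le_rfl⟩
    · exact hK.wf.q e he
  · rw [hall]
    intro b hb
    rcases Multiset.mem_cons.1 hb with rfl | hb
    · exact ⟨hp, hw⟩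
    · exact hM.all b hb
  · have e1 : Pot ε M' = Pot ε M₂ + M₂.rem * a.w + a.w * a.p + qPhi M₂.q a.w a.p
        + (1 + 2 / ε) * (a.w * a.p) := by
      have h1 : M'.rem = M₂.rem := rfl
      have h2 : M'.rz = M₂.rz := rfl
      have h3 : M'.rw = M₂.rw := rfl
      unfold Pot
      rw [h1, h2, h3]
      simp only [M', Mach.ins, qW_cons, qPsi_cons, Multiset.map_cons, Multiset.sum_cons]
      ring
    have e2 := qPhi_le_P M₂.q a.w a.p
    have e3 : qPhi M₂.q a.w a.p ≤ M.Phi a.w a.p := by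
      rw [k2]
      refine (g5 a.w a.p hw.le).trans ?_
      have := hM.rz_nonneg.1
      have : 0 ≤ min (M.rz * a.p) (a.w * M.rem) := le_min (by positivity) (by positivity)
      unfold Mach.Phi; linarith
    rw [← k2] at g2 k3
    have e4 : (2 + 2 / ε) * (a.w * a.p) ≤ (1 - ε / 2) * (8 / ε * a.w * a.p) := by
      have : (1 - ε / 2) * (8 / ε * a.w * a.p) - (2 + 2 / ε) * (a.w * a.p)
          = 6 * (1 / ε - 1) * (a.w * a.p) := by field_simp; ring
      have h1 : 1 ≤ 1 / ε := by rw [le_div_iff₀ hε]; linarith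
      have : 0 ≤ 6 * (1 / ε - 1) * (a.w * a.p) := by
        have : 0 ≤ 1 / ε - 1 := by linarith
        positivity
      linarith
    have e5 : (1 - ε / 2) * qPhi M₂.q a.w a.p ≤ (1 - ε / 2) * M.Phi a.w a.p :=
      mul_le_mul_of_nonneg_left e3 (by linarith)
    have e6 : ε * qPhi M₂.q a.w a.p ≤ ε * (a.w * qP M₂.q) :=
      mul_le_mul_of_nonneg_left e2 hε.le
    rw [hl, e1]
    nlinarith
  · have h2 : M'.rz = M₂.rz := rfl
    have h3 : M'.rw = M₂.rw := rfl
    have : rejPot M' = rejPot M₂ := by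
      unfold rejPot
      rw [h2, h3]
      simp [M', Mach.ins]
    rw [this]; linarith
  · have : flowPot s M' = flowPot s M₂ := by
      unfold flowPot
      simp [M', Mach.ins, hr]
    rw [this]
    exact hK.flow s hs
  · intro X y Y w p t hw' hst hY hf
    have h2 := hK.feas X y Y w p t hw' hst hY hf
    have h3 : M₂.Phi w p ≤ M'.Phi w p := by
      have h2 : M'.rz = M₂.rz := rfl
      have h3 : M'.rem = M₂.rem := rfl
      unfold Mach.Phi
      rw [h2, h3]
      simp only [M', Mach.ins, qPhi_cons]
      have : 0 ≤ min (a.w * (p : ℝ)) (w * a.p) := le_min (by positivity) (by positivity)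
      linarith
    unfold Feas at *
    have h4 : M'.log = M₂.log := rfl
    rw [h4]
    exact h2.imp (fun h => by linarith) id
  · intro e he
    rcases Multiset.mem_cons.1 he with rfl | he
    · exact Or.inl rfl
    · exact Or.inr (g7 e (by rwa [k2] at he))
  · intro e n h
    obtain ⟨e', h1, h2⟩ := k5 e n h
    exact ⟨e', by rw [← g6]; exact h1, h2⟩

/-- Starting a job of highest density leaves the potential essentially unchanged: the waiting time
it causes to the others moves from `qPsi` to the term `rem * qW`. Restoring its full weight is paid
for by its reserve. -/
theorem startM_spec (s : ℕ) {ε : ℝ} (M : Mach m) (hM : Wf M) :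
    let M' := startM M
    Keeps s M M' ∧ M'.rej = M.rej ∧ Pot ε M' ≤ Pot ε M ∧ rejPot M' ≤ rejPot M ∧
    (∀ e ∈ M'.q, e ∈ M.q) ∧ (M'.run = none → M'.q = 0) ∧ M'.rem + qP M'.q = M.rem + qP M.q ∧
    ∀ e n, M'.run = some (e, n) → M.run = some (e, n) ∨ (n = e.j.p ∧ ∃ e' ∈ M.q, e'.j = e.j) := by
  intro M'
  rcases hr : M.run with _ | x
  swap
  · have : M' = M := by simp [M', startM, hr]
    rw [this]
    exact ⟨Keeps.refl s hM, rfl, le_rfl, le_rfl, fun _ h => h, by simp [hr], rfl,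
      fun e n h => Or.inl (by rw [← hr, h])⟩
  by_cases h0 : M.q = 0
  · have : M' = M := by simp [M', startM, hr, h0]
    rw [this]
    exact ⟨Keeps.refl s hM, rfl, le_rfl, le_rfl, fun _ h => h, fun _ => h0, rfl,
      fun e n h => Or.inl (by rw [← hr, h])⟩
  obtain ⟨c, hc⟩ : ∃ c, c = (exists_max_dens M.q h0).choose := ⟨_, rfl⟩
  obtain ⟨hq, hmax⟩ := (exists_max_dens M.q h0).choose_spec
  rw [← hc] at hq hmax
  obtain ⟨c, q'⟩ := c
  simp only at hq hmax
  have hM' : M' = { M with q := q', run := some (⟨c.j, c.j.w⟩, c.j.p) } := by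
    simp only [M', startM, hr, dif_neg h0, ← hc]
  clear_value M'
  have hcq : c ∈ M.q := by rw [hq]; exact Multiset.mem_cons_self _ _
  have hsub : ∀ e ∈ q', e ∈ M.q := fun e he => by rw [hq]; exact Multiset.mem_cons_of_mem he
  have hc0 := hM.q_nonneg c hcq
  have hcp := hM.q_pos c hcq
  have hcw := (hM.all _ (M.mem_all_q hcq)).2
  have hcv := (hM.q c hcq).2
  have hrem : M.rem = 0 := by simp [Mach.rem, hr]
  have hrz : M.rz = 0 := by simp [Mach.rz, hr]
  have hrw : M.rw = 0 := by simp [Mach.rw, hr]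
  have hrem' : M'.rem = c.j.p := by simp [Mach.rem, hM']
  have hrz' : M'.rz = c.j.w := by simp [Mach.rz, hM']
  have hrw' : M'.rw = c.j.w := by simp [Mach.rw, hM']
  have hq' : M'.q = q' := by simp [hM']
  have hl' : M'.log = M.log := by simp [hM']
  have hrun' : M'.run = some (⟨c.j, c.j.w⟩, c.j.p) := by simp [hM']
  have hrej' : M'.rej = M.rej := by simp [hM']
  have hdone' : M'.done = M.done := by simp [hM']
  have hall : M'.all = M.all := by
    simp only [Mach.all, hrun', hq', hrej', hdone', hr, hq, Option.elim_none,
      Option.elim_some, ← Multiset.singleton_add, Multiset.map_add, Multiset.map_singleton, add_zero]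
    ac_rfl
  refine ⟨⟨hall, hdone', ⟨by rw [hq']; exact fun e he => hM.q e (hsub e he), ?_,
    by rw [hl']; exact hM.log, by rw [hall]; exact hM.all⟩, hl'.ge, hrej'.ge, ?_, ?_⟩, hrej', ?_, ?_,
    by rw [hq']; exact hsub, by simp [hrun'], ?_, ?_⟩
  · intro e n h
    rw [hrun'] at h
    simp only [Option.some.injEq, Prod.mk.injEq] at h
    obtain ⟨rfl, rfl⟩ := h
    exact ⟨hcp, le_rfl, hcw.le, le_rfl⟩
  · intro u _
    simp only [flowPot, hdone', hq', hrun', hr, hq, Multiset.map_cons, Multiset.sum_cons,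
      Option.elim_none, Option.elim_some]
    linarith
  · intro X y Y w p t hw _ _ hf
    have h3 : M.Phi w p ≤ M'.Phi w p := by
      simp only [Mach.Phi, hrem, hrz, hrem', hrz', hq', hq, qPhi_cons]
      have : min (c.v * (p : ℝ)) (w * c.j.p) ≤ min (c.j.w * (p : ℝ)) (w * c.j.p) := by gcongr
      simp only [zero_mul, Nat.cast_zero, mul_zero, min_self]
      linarith
    unfold Feas at *
    rw [hl']
    exact hf.imp (fun h => by linarith) id
  · have h1 : qPsi M.q = qPsi q' + c.v * c.j.p + c.j.p * qW q' := by
      rw [hq, qPsi_cons, qPhi_eq_of_max c q' hcp (fun e he => hM.q_pos e (hsub e he)) hmax]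
    have h2 : 0 ≤ c.v * c.j.p := by positivity
    simp only [Pot, hrem, hrem', hrz', hrw', hq', hl', h1]
    simp only [hq, Multiset.map_cons, Multiset.sum_cons]
    push_cast
    nlinarith
  · simp only [rejPot, hrej', hq', hrz', hrw', hrz, hrw, hq, Multiset.map_cons, Multiset.sum_cons]
    linarith
  · rw [hrem, hrem', hq', hq, qP_cons]; omega
  · intro e n h
    rw [hrun'] at h
    simp only [Option.some.injEq, Prod.mk.injEq] at h
    obtain ⟨rfl, rfl⟩ := h
    exact Or.inr ⟨rfl, c, hcq, rfl⟩

/-- Waiting jobs have at least half of their weight left, so their residual weight pays for half of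
the flow-time accumulated in one slot. -/
theorem qW_flow (q : Multiset (Ent m)) (u : ℝ) (h : ∀ e ∈ q, e.j.w / 2 ≤ e.v) :
    (q.map fun e => e.j.w * (u + 1 - e.j.r)).sum
      ≤ (q.map fun e => e.j.w * (u - e.j.r)).sum + 2 * qW q := by
  unfold qW
  rw [← Multiset.sum_map_mul_left, ← Multiset.sum_map_add]
  refine Multiset.sum_map_le_sum_map _ _ fun e he => ?_
  have := h e he
  linarith

/-- One slot decreases the potential by the weight present. -/
theorem tickM_spec (u : ℕ) {ε : ℝ} (hε : 0 < ε) (M : Mach m) (hM : Wf M)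
    (hst : M.run = none → M.q = 0) :
    let M' := tickM u M
    M'.all = M.all ∧ Wf M' ∧ M'.log = M.log ∧ M'.rej = M.rej ∧ M'.q = M.q ∧
    Pot ε M' + (M.rw + qW M.q) ≤ Pot ε M ∧
    rejPot M' ≤ rejPot M ∧
    flowPot (u + 1) M' ≤ flowPot u M + 2 * (M.rw + qW M.q) ∧
    (∀ X y Y w p t, 0 ≤ w → Feas X y Y w p t M → Feas X (y + w) Y w p t M') ∧
    M'.rem + qP M'.q = M.rem + qP M.q - 1 ∧
    (∀ e n, M'.run = some (e, n) → M.run = some (e, n + 1)) ∧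
    ∀ d ∈ M'.done, d ∈ M.done ∨ ∃ e, M.run = some (e, 1) ∧ d = (e.j, u + 1) := by
  intro M'
  rcases hr : M.run with _ | ⟨e, n⟩
  · have : M' = M := by simp [M', tickM, hr]
    rw [this]
    have hq := hst hr
    refine ⟨rfl, hM, rfl, rfl, rfl, ?_, le_rfl, ?_, ?_, ?_, by simp [hr], fun d hd => Or.inl hd⟩
    · simp [Mach.rw, hr, hq, qW]
    · simp [flowPot, Mach.rw, hr, hq, qW]
    · intro X y Y w p t hw h
      exact h.imp (fun h => by linarith) id
    · simp [Mach.rem, hr, hq, qP]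
  obtain ⟨hn, hnp, hz, hzw⟩ := hM.run e n hr
  have hejw := (hM.all _ (M.mem_all_run hr)).2
  have hrem : M.rem = n := by simp [Mach.rem, hr]
  have hrz : M.rz = e.v := by simp [Mach.rz, hr]
  have hrw : M.rw = e.j.w := by simp [Mach.rw, hr]
  have hqw := qW_flow M.q u fun e he => (hM.q e he).1
  by_cases hn1 : n ≤ 1
  · have h1 : n = 1 := by omega
    subst h1
    have hM' : M' = { M with run := none, done := (e.j, u + 1) ::ₘ M.done } := by
      simp [M', tickM, hr]
    clear_value M'
    have hrem' : M'.rem = 0 := by simp [Mach.rem, hM']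
    have hrz' : M'.rz = 0 := by simp [Mach.rz, hM']
    have hrw' : M'.rw = 0 := by simp [Mach.rw, hM']
    have hq' : M'.q = M.q := by simp [hM']
    have hl' : M'.log = M.log := by simp [hM']
    have hrun' : M'.run = none := by simp [hM']
    have hrej' : M'.rej = M.rej := by simp [hM']
    have hdone' : M'.done = (e.j, u + 1) ::ₘ M.done := by simp [hM']
    have hall : M'.all = M.all := by
      simp only [Mach.all, hrun', hq', hrej', hdone', hr, Option.elim_none,
        Option.elim_some, ← Multiset.singleton_add, Multiset.map_add, Multiset.map_singleton,
        add_zero]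
      ac_rfl
    refine ⟨hall, ⟨by rw [hq']; exact hM.q, by simp [hrun'], by rw [hl']; exact hM.log,
      by rw [hall]; exact hM.all⟩, hl', hrej', hq', ?_, ?_, ?_, ?_, ?_, by simp [hrun'], ?_⟩
    · simp only [Pot, hrem, hrem', hrz, hrz', hrw, hrw', hq', hl']
      have : 0 ≤ 2 / ε * e.v := by positivity
      push_cast
      linarith
    · simp only [rejPot, hrej', hq', hrz', hrw', hrz, hrw]
      linarith
    · simp only [flowPot, hdone', hq', hrun', hr, Multiset.map_cons, Multiset.sum_cons,
        Option.elim_none, Option.elim_some, hrw]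
      push_cast
      linarith
    · intro X y Y w p t hw h
      unfold Feas at *
      rw [hl']
      refine h.imp (fun h => ?_) id
      simp only [Mach.Phi, hrem, hrz, hrem', hrz', hq'] at h ⊢
      have := min_le_right (e.v * (p : ℝ)) (w * (1 : ℕ))
      simp only [zero_mul, Nat.cast_zero, Nat.cast_one, mul_one, mul_zero, min_self] at this h ⊢
      linarith
    · rw [hrem, hrem', hq']; omega
    · intro d hd
      rw [hdone'] at hd
      rcases Multiset.mem_cons.1 hd with rfl | hd
      · exact Or.inr ⟨e, rfl, rfl⟩
      · exact Or.inl hd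
  · have hM' : M' = { M with run := some (e, n - 1) } := by simp [M', tickM, hr, hn1]
    clear_value M'
    have hrem' : M'.rem = n - 1 := by simp [Mach.rem, hM']
    have hrz' : M'.rz = e.v := by simp [Mach.rz, hM']
    have hrw' : M'.rw = e.j.w := by simp [Mach.rw, hM']
    have hq' : M'.q = M.q := by simp [hM']
    have hl' : M'.log = M.log := by simp [hM']
    have hrun' : M'.run = some (e, n - 1) := by simp [hM']
    have hrej' : M'.rej = M.rej := by simp [hM']
    have hdone' : M'.done = M.done := by simp [hM']
    have hall : M'.all = M.all := by
      simp only [Mach.all, hrun', hq', hrej', hdone', hr, Option.elim_some]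
    have hcast : ((n - 1 : ℕ) : ℝ) = n - 1 := by rw [Nat.cast_sub (by omega)]; simp
    refine ⟨hall, ⟨by rw [hq']; exact hM.q, ?_, by rw [hl']; exact hM.log,
      by rw [hall]; exact hM.all⟩, hl', hrej', hq', ?_, ?_, ?_, ?_, ?_, ?_, ?_⟩
    · intro e' n' h
      rw [hrun'] at h
      simp only [Option.some.injEq, Prod.mk.injEq] at h
      obtain ⟨rfl, rfl⟩ := h
      exact ⟨by omega, by omega, hz, hzw⟩
    · simp only [Pot, hrem, hrem', hrz, hrz', hrw, hrw', hq', hl', hcast]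
      have : 0 ≤ 2 / ε * e.v := by positivity
      linarith
    · simp only [rejPot, hrej', hq', hrz', hrw', hrz, hrw]
      linarith
    · simp only [flowPot, hdone', hq', hrun', hr, Option.elim_some, hrw]
      push_cast
      linarith
    · intro X y Y w p t hw h
      unfold Feas at *
      rw [hl']
      refine h.imp (fun h => ?_) id
      simp only [Mach.Phi, hrem, hrz, hrem', hrz', hq', hcast] at h ⊢
      have : min (e.v * (p : ℝ)) (w * n) ≤ min (e.v * (p : ℝ)) (w * (n - 1)) + w := by
        rw [← min_add_add_right]
        exact min_le_min (by linarith) (by linarith)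
      linarith
    · rw [hrem, hrem', hq']; omega
    · intro e' n' h
      rw [hrun'] at h
      simp only [Option.some.injEq, Prod.mk.injEq] at h
      obtain ⟨rfl, h⟩ := h
      simp only [Option.some.injEq, Prod.mk.injEq, true_and]
      omega
    · intro d hd
      rw [hdone'] at hd
      exact Or.inl hd

/-! ### The invariant of the whole system -/

/-- The invariant at time `u`, when the jobs with identifiers `D` have arrived. The slots before
`u` are described by the schedule `sc`, by the weights `V i t` present on machine `i` in slot `t`
and by the dual values `B i t`. Next to the bounds on the potentials it contains the dual constraints, in the form `Feas`
for slots from `u` on and in final form for earlier ones, and the facts about `sc` which make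
the final schedule non-preemptive: waiting jobs have not been processed, a running job has been
processed exactly in the last slots, and a finished job in the slots up to its completion time. -/
structure Inv (ε : ℝ) (I : MInstance m) (sc : Fin m → ℕ → Option ℕ) (V B : Fin m → ℕ → ℝ)
    (u : ℕ) (D : Multiset ℕ) (G : Fin m → Mach m) : Prop where
  wf : ∀ i, Wf (G i)
  cost : ∀ i, ∑ t ∈ range u, V i t + Pot ε (G i) ≤ (1 - ε / 2) * ((G i).all.map fun a => a.l).sum
  rej : ∀ i, rejPot (G i) ≤ 3 * ε * ((G i).all.map fun a => a.w).sum
  flow : ∀ i, flowPot u (G i) ≤ 2 * ∑ t ∈ range u, V i t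
  feas : ∀ k, ∀ a ∈ (G k).all, ∀ i t, u ≤ t →
    Feas (a.l - 8 / ε * a.w * a.pv i) (a.w * ((u : ℝ) - a.r)) (a.w * (4 * ((t : ℝ) - a.r) + 4))
      a.w (a.pv i) t (G i)
  fin : ∀ k, ∀ a ∈ (G k).all, ∀ i t, a.r ≤ t → t < u →
    a.l ≤ 8 / ε * a.w * a.pv i + a.pv i * B i t + a.w * (4 * ((t : ℝ) + 1 - a.r))
  ids : ∑ i, (G i).all.map (fun a => a.id) = D
  inst : ∀ i, ∀ a ∈ (G i).all, a.id ∈ I.J ∧ a.r = I.r a.id ∧ a.w = I.w a.id ∧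
    (∀ i', a.pv i' = I.p i' a.id) ∧ a.p = a.pv i ∧ a.r ≤ u
  rel : ∀ i' u' j, u' < u → sc i' u' = some j → j ∈ I.J ∧ I.r j ≤ u'
  sq : ∀ i, ∀ e ∈ (G i).q, ∀ i' u', u' < u → sc i' u' ≠ some e.j.id
  sr : ∀ i e n, (G i).run = some (e, n) → e.j.r + e.j.p ≤ u + n ∧ ∀ u' < u,
    (∀ i', i' ≠ i → sc i' u' ≠ some e.j.id) ∧ (sc i u' = some e.j.id ↔ u + n ≤ u' + e.j.p)
  sd : ∀ i, ∀ d ∈ (G i).done, d.2 ≤ u ∧ d.1.r + d.1.p ≤ d.2 ∧ ∀ u' < u,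
    (∀ i', i' ≠ i → sc i' u' ≠ some d.1.id) ∧
      (sc i u' = some d.1.id ↔ d.2 ≤ u' + d.1.p ∧ u' < d.2)

/-- A job is known to one machine only. -/
theorem Inv.uniq {ε : ℝ} {I : MInstance m} {sc : Fin m → ℕ → Option ℕ} {V B : Fin m → ℕ → ℝ}
    {u : ℕ} {D : Multiset ℕ} {G : Fin m → Mach m} (h : Inv ε I sc V B u D G) (hD : D.Nodup)
    {i k : Fin m} {a b : Job m} (ha : a ∈ (G i).all) (hb : b ∈ (G k).all) (hab : a.id = b.id) :
    i = k := by
  by_contra hik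
  have h1 : (G i).all.map (fun a => a.id) + (G k).all.map (fun a => a.id) ≤ D := by
    rw [← h.ids, ← sum_pair (f := fun i => (G i).all.map (fun a => a.id)) hik]
    exact sum_le_sum_of_subset (subset_univ _)
  have h2 := (Multiset.nodup_add.1 (Multiset.nodup_of_le h1 hD)).2.2
  exact Multiset.disjoint_left.1 h2 (Multiset.mem_map_of_mem _ ha)
    (by rw [hab]; exact Multiset.mem_map_of_mem _ hb)

theorem Inv.uniq_run {ε : ℝ} {I : MInstance m} {sc : Fin m → ℕ → Option ℕ}
    {V B : Fin m → ℕ → ℝ} {u : ℕ} {D : Multiset ℕ} {G : Fin m → Mach m}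
    (h : Inv ε I sc V B u D G) (hD : D.Nodup) {i : Fin m} {e : Ent m} {n : ℕ}
    (he : (G i).run = some (e, n)) :
    (∀ e' ∈ (G i).q, e'.j.id ≠ e.j.id) ∧ ∀ d ∈ (G i).done, d.1.id ≠ e.j.id := by
  have h1 : (G i).all.map (fun a => a.id) ≤ D := by
    rw [← h.ids]
    exact single_le_sum (f := fun i => (G i).all.map (fun a => a.id))
      (fun _ _ => Multiset.zero_le _) (mem_univ i)
  have h2 := Multiset.nodup_of_le h1 hD
  simp only [Mach.all, he, Option.elim_some, Multiset.map_add, Multiset.map_map,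
    Multiset.map_singleton] at h2
  obtain ⟨h3, -, h4⟩ := Multiset.nodup_add.1 h2
  obtain ⟨h3, -, -⟩ := Multiset.nodup_add.1 h3
  obtain ⟨-, -, h3⟩ := Multiset.nodup_add.1 h3
  refine ⟨fun e' he' hh => ?_, fun d hd hh => ?_⟩
  · refine Multiset.disjoint_left.1 h3 (Multiset.mem_map_of_mem _ he') ?_
    simp [hh]
  · refine Multiset.disjoint_left.1 h4 ?_ (Multiset.mem_map_of_mem _ hd)
    simp [hh]

theorem Inv.arrive {ε : ℝ} {I : MInstance m} {sc : Fin m → ℕ → Option ℕ} {V B : Fin m → ℕ → ℝ}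
    {u : ℕ} {D : Multiset ℕ} {G : Fin m → Mach m} (h : Inv ε I sc V B u D G) (hm : 0 < m)
    (hε : 0 < ε) (hε1 : ε ≤ 1) (a : Job m) (ha : a.id ∈ I.J) (har : a.r = u)
    (hIr : I.r a.id = u) (hw : a.w = I.w a.id) (hpv : ∀ i, a.pv i = I.p i a.id) :
    Inv ε I sc V B u (a.id ::ₘ D) (arrive hm ε u G a) := by
  obtain ⟨k, hk⟩ : ∃ k, k = (exists_min_mach hm fun i => lamOf ε (G i) i a).choose := ⟨_, rfl⟩
  have hmin := (exists_min_mach hm fun i => lamOf ε (G i) i a).choose_spec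
  rw [← hk] at hmin
  obtain ⟨b, hb⟩ : ∃ b, b = disp ε (G k) k a := ⟨_, rfl⟩
  have hG : NPSched.arrive hm ε u G a = Function.update G k (arrM ε u (G k) b) := by
    simp only [NPSched.arrive, ← hk, hb]
  have b1 : b.id = a.id := by rw [hb]; rfl
  have b2 : b.r = u := by rw [hb]; exact har
  have b3 : b.w = a.w := by rw [hb]; rfl
  have b4 : b.pv = a.pv := by rw [hb]; rfl
  have b5 : b.p = a.pv k := by rw [hb]; rfl
  have b6 : b.l = 8 / ε * a.w * a.pv k + (G k).Phi a.w (a.pv k) := by rw [hb]; rfl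
  have hw0 : 0 < a.w := by rw [hw]; exact I.hw _ ha
  obtain ⟨c1, c2, c3, c4, c5, c6, c7, c8, c9, c10, c11⟩ := arrM_spec u hε hε1 (G k) (h.wf k) b
    (by rw [b3]; exact hw0) (by rw [b5, hpv]; exact I.hp _ _ ha) b2
    (fun x hx => (h.inst k x hx).2.2.2.2.2) (by rw [b3, b5, b6])
  obtain ⟨M', hM'⟩ : ∃ M', M' = arrM ε u (G k) b := ⟨_, rfl⟩
  simp only [← hM'] at c1 c2 c3 c4 c5 c6 c7 c8 c9 c10 c11
  rw [hG, ← hM']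
  have hself : Function.update G k M' k = M' := Function.update_self ..
  have hne : ∀ i, i ≠ k → Function.update G k M' i = G i := fun i hi =>
    Function.update_of_ne hi ..
  have hmem : ∀ i, ∀ x ∈ (Function.update G k M' i).all,
      (x = b ∧ i = k) ∨ x ∈ (G i).all := by
    intro i x hx
    by_cases hi : i = k
    · subst hi
      rw [hself, c1] at hx
      rcases Multiset.mem_cons.1 hx with hx | hx
      · exact Or.inl ⟨hx, rfl⟩
      · exact Or.inr hx
    · rw [hne i hi] at hx; exact Or.inr hx
  refine ⟨?_, ?_, ?_, ?_, ?_, ?_, ?_, ?_, h.rel, ?_, ?_, ?_⟩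
  · intro i
    by_cases hi : i = k
    · subst hi; rw [hself]; exact c2
    · rw [hne i hi]; exact h.wf i
  · intro i
    by_cases hi : i = k
    · subst hi
      rw [hself, c1, Multiset.map_cons, Multiset.sum_cons]
      have := h.cost i
      linarith
    · rw [hne i hi]; exact h.cost i
  · intro i
    by_cases hi : i = k
    · subst hi
      rw [hself, c1, Multiset.map_cons, Multiset.sum_cons]
      have := h.rej i
      linarith
    · rw [hne i hi]; exact h.rej i
  · intro i
    by_cases hi : i = k
    · subst hi
      rw [hself]
      exact c8.trans (h.flow i)
    · rw [hne i hi]; exact h.flow i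
  · intro i' x hx i t ht
    have hut : (u : ℝ) ≤ t := by exact_mod_cast ht
    have key : 0 ≤ x.w ∧ x.r ≤ u ∧ Feas (x.l - 8 / ε * x.w * x.pv i) (x.w * ((u : ℝ) - x.r))
        (x.w * (4 * ((t : ℝ) - x.r) + 4)) x.w (x.pv i) t (G i) := by
      rcases hmem i' x hx with ⟨rfl, rfl⟩ | hx
      · refine ⟨by rw [b3]; exact hw0.le, b2.le, Or.inl ?_⟩
        rw [b2, b3, b4, b6]
        have h1 := hmin i
        unfold lamOf at h1
        have h2 := Vt_nonneg t (G i).log (h.wf i).log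
        have h3 : 0 ≤ (a.pv i : ℝ) * Vt t (G i).log := by positivity
        linarith
      · exact ⟨((h.wf i').all x hx).2.le, (h.inst i' x hx).2.2.2.2.2, h.feas i' x hx i t ht⟩
    obtain ⟨k1, k2, k3⟩ := key
    by_cases hi : i = k
    · subst hi
      rw [hself]
      refine c9 _ _ _ _ _ _ k1 ht ?_ k3
      have : (x.r : ℝ) ≤ u := by exact_mod_cast k2
      nlinarith
    · rw [hne i hi]; exact k3
  · intro i' x hx i t h1 h2
    rcases hmem i' x hx with ⟨rfl, rfl⟩ | hx
    · omega
    · exact h.fin i' x hx i t h1 h2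
  · rw [← h.ids]
    have : ∀ i, (Function.update G k M' i).all.map (fun a => a.id)
        = (if i = k then {a.id} else 0) + (G i).all.map (fun a => a.id) := by
      intro i
      by_cases hi : i = k
      · subst hi
        rw [hself, c1, Multiset.map_cons, b1, if_pos rfl, Multiset.singleton_add]
      · rw [hne i hi, if_neg hi, zero_add]
    simp only [this, sum_add_distrib, sum_ite_eq', mem_univ, if_true, Multiset.singleton_add]
  · intro i x hx
    rcases hmem i x hx with ⟨rfl, rfl⟩ | hx
    · rw [b1, b2, b3, b4, b5]
      exact ⟨ha, hIr.symm, hw, hpv, rfl, le_rfl⟩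
    · exact h.inst i x hx
  · intro i e he
    by_cases hi : i = k
    · subst hi
      rw [hself] at he
      rcases c10 e he with h1 | ⟨e', h1, h2⟩
      · intro i' u' hu' hh
        rw [h1, b1] at hh
        have := (h.rel i' u' _ hu' hh).2
        omega
      · rw [← h2]; exact h.sq i e' h1
    · rw [hne i hi] at he; exact h.sq i e he
  · intro i e n he
    by_cases hi : i = k
    · subst hi
      rw [hself] at he
      obtain ⟨e', h1, h2⟩ := c11 e n he
      rw [← h2]
      exact h.sr i e' n h1
    · rw [hne i hi] at he; exact h.sr i e n he
  · intro i d hd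
    by_cases hi : i = k
    · subst hi
      rw [hself, c5] at hd
      exact h.sd i d hd
    · rw [hne i hi] at hd; exact h.sd i d hd

theorem Inv.start {ε : ℝ} {I : MInstance m} {sc : Fin m → ℕ → Option ℕ} {V B : Fin m → ℕ → ℝ}
    {u : ℕ} {D : Multiset ℕ} {G : Fin m → Mach m} (h : Inv ε I sc V B u D G) :
    Inv ε I sc V B u D fun i => startM (G i) := by
  have hs := fun i => startM_spec u (ε := ε) (G i) (h.wf i)
  have hall : ∀ i, (startM (G i)).all = (G i).all := fun i => (hs i).1.all
  refine ⟨fun i => (hs i).1.wf, ?_, ?_, ?_, ?_, ?_, ?_, ?_, h.rel, ?_, ?_, ?_⟩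
  · intro i
    rw [hall]
    have := (hs i).2.2.1
    have := h.cost i
    linarith
  · intro i
    rw [hall]
    exact (hs i).2.2.2.1.trans (h.rej i)
  · intro i
    exact ((hs i).1.flow u fun x hx => (h.inst i x hx).2.2.2.2.2).trans (h.flow i)
  · intro k x hx i t ht
    rw [hall] at hx
    have hut : (u : ℝ) ≤ t := by exact_mod_cast ht
    have k1 := ((h.wf k).all x hx).2.le
    have : (x.r : ℝ) ≤ u := by exact_mod_cast (h.inst k x hx).2.2.2.2.2
    exact (hs i).1.feas _ _ _ _ _ _ k1 ht (by nlinarith) (h.feas k x hx i t ht)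
  · intro k x hx
    rw [hall] at hx
    exact h.fin k x hx
  · simp only [hall]; exact h.ids
  · intro i x hx
    rw [hall] at hx
    exact h.inst i x hx
  · intro i e he
    exact h.sq i e ((hs i).2.2.2.2.1 e he)
  · intro i e n he
    rcases (hs i).2.2.2.2.2.2.2 e n he with h1 | ⟨rfl, e', h1, h2⟩
    · exact h.sr i e n h1
    · rw [← h2]
      have h3 := (h.inst i _ ((G i).mem_all_q h1)).2.2.2.2.2
      refine ⟨by omega, fun u' hu' => ⟨fun i' _ => h.sq i e' h1 i' u' hu', ?_⟩⟩
      have h4 := h.sq i e' h1 i u' hu'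
      simp only [h4, false_iff]
      omega
  · intro i d hd
    rw [(hs i).1.done] at hd
    exact h.sd i d hd

theorem Inv.tick {ε : ℝ} {I : MInstance m} {sc : Fin m → ℕ → Option ℕ} {V B : Fin m → ℕ → ℝ}
    {u : ℕ} {D : Multiset ℕ} {G : Fin m → Mach m} (h : Inv ε I sc V B u D G) (hε : 0 < ε)
    (hD : D.Nodup) (hidle : ∀ i, (G i).run = none → (G i).q = 0)
    (hsc : ∀ i, sc i u = (G i).run.map fun x => x.1.j.id)
    (hV : ∀ i, V i u = (G i).rw + qW (G i).q) (hB : ∀ i, B i u = V i u + Vt u (G i).log) :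
    Inv ε I sc V B (u + 1) D fun i => tickM u (G i) := by
  have hs := fun i => tickM_spec u hε (G i) (h.wf i) (hidle i)
  have hall : ∀ i, (tickM u (G i)).all = (G i).all := fun i => (hs i).1
  have hsome : ∀ i j, sc i u = some j → ∃ e n, (G i).run = some (e, n) ∧ e.j.id = j := by
    intro i j hj
    rw [hsc, Option.map_eq_some_iff] at hj
    obtain ⟨⟨e, n⟩, h1, h2⟩ := hj
    exact ⟨e, n, h1, h2⟩
  have hother : ∀ i, ∀ a ∈ (G i).all, ∀ i', i' ≠ i → sc i' u ≠ some a.id := by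
    intro i a ha i' hi' hh
    obtain ⟨e, n, h1, h2⟩ := hsome i' _ hh
    exact hi' (h.uniq hD ((G i').mem_all_run h1) ha h2)
  refine ⟨fun i => (hs i).2.1, ?_, ?_, ?_, ?_, ?_, ?_, ?_, ?_, ?_, ?_, ?_⟩
  · intro i
    rw [hall, sum_range_succ, hV]
    have := (hs i).2.2.2.2.2.1
    have := h.cost i
    linarith
  · intro i
    rw [hall]
    exact (hs i).2.2.2.2.2.2.1.trans (h.rej i)
  · intro i
    rw [sum_range_succ, hV]
    have := (hs i).2.2.2.2.2.2.2.1
    have := h.flow i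
    linarith
  · intro k x hx i t ht
    rw [hall] at hx
    have k1 := ((h.wf k).all x hx).2.le
    have h1 := (hs i).2.2.2.2.2.2.2.2.1 _ _ _ _ _ _ k1 (h.feas k x hx i t (by omega))
    have h2 : x.w * (((u + 1 : ℕ) : ℝ) - x.r) = x.w * ((u : ℝ) - x.r) + x.w := by
      push_cast; ring
    rw [h2]
    exact h1
  · intro k x hx i t hrt ht
    rw [hall] at hx
    rcases Nat.lt_succ_iff_lt_or_eq.1 ht with ht | rfl
    · exact h.fin k x hx i t hrt ht
    have k1 := ((h.wf k).all x hx).2.le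
    have h1 := h.feas k x hx i t le_rfl
    have h2 := (G i).Phi_le_W x.w (x.pv i)
    have h3 := (h.wf i).rz_nonneg.2
    have h4 : (x.pv i : ℝ) * ((G i).rz + qW (G i).q) ≤ x.pv i * ((G i).rw + qW (G i).q) := by
      gcongr
    have h5 : (x.r : ℝ) ≤ t := by exact_mod_cast hrt
    have h6 : 0 ≤ x.w * ((t : ℝ) - x.r) := mul_nonneg k1 (by linarith)
    rw [hB, hV]
    rcases h1 with h1 | h1
    · nlinarith
    · have h7 : 0 ≤ x.pv i * ((G i).rw + qW (G i).q) := by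
        have := qW_nonneg _ (h.wf i).q_nonneg
        have := (h.wf i).rz_nonneg
        have : 0 ≤ (G i).rw + qW (G i).q := by linarith
        positivity
      nlinarith
  · simp only [hall]; exact h.ids
  · intro i x hx
    rw [hall] at hx
    obtain ⟨h1, h2, h3, h4, h5, h6⟩ := h.inst i x hx
    exact ⟨h1, h2, h3, h4, h5, by omega⟩
  · intro i' u' j hu' hj
    rcases Nat.lt_succ_iff_lt_or_eq.1 hu' with hu' | rfl
    · exact h.rel i' u' j hu' hj
    · obtain ⟨e, n, h1, rfl⟩ := hsome i' j hj
      obtain ⟨h2, h3, -, -, -, h4⟩ := h.inst i' _ ((G i').mem_all_run h1)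
      exact ⟨h2, by omega⟩
  · intro i e he i' u' hu'
    rw [(hs i).2.2.2.2.1] at he
    rcases Nat.lt_succ_iff_lt_or_eq.1 hu' with hu' | rfl
    · exact h.sq i e he i' u' hu'
    · by_cases hi : i' = i
      · subst hi
        intro hh
        obtain ⟨e', n, h1, h2⟩ := hsome i' _ hh
        exact (h.uniq_run hD h1).1 e he h2.symm
      · exact hother i _ ((G i).mem_all_q he) i' hi
  · intro i e n he
    have h1 := (hs i).2.2.2.2.2.2.2.2.2.2.1 e n he
    obtain ⟨h2, h3⟩ := h.sr i e _ h1
    refine ⟨by omega, fun u' hu' => ?_⟩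
    rcases Nat.lt_succ_iff_lt_or_eq.1 hu' with hu' | rfl
    · obtain ⟨h4, h5⟩ := h3 u' hu'
      exact ⟨h4, h5.trans (by omega)⟩
    · refine ⟨hother i _ ((G i).mem_all_run h1), ?_⟩
      have := ((h.wf i).run e _ h1).2.1
      rw [hsc, h1]
      simp only [Option.map_some, true_iff]
      omega
  · intro i d hd
    rcases (hs i).2.2.2.2.2.2.2.2.2.2.2 d hd with hd1 | ⟨e, h1, rfl⟩
    · obtain ⟨h2, h3, h4⟩ := h.sd i d hd1
      refine ⟨by omega, h3, fun u' hu' => ?_⟩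
      rcases Nat.lt_succ_iff_lt_or_eq.1 hu' with hu' | rfl
      · exact h4 u' hu'
      · refine ⟨hother i _ ((G i).mem_all_done hd1), ?_⟩
        have h5 : sc i u' ≠ some d.1.id := by
          intro hh
          obtain ⟨e', n, h1, h2⟩ := hsome i _ hh
          exact (h.uniq_run hD h1).2 d hd1 h2.symm
        simp only [h5, false_iff]
        omega
    · obtain ⟨h2, h3⟩ := h.sr i e _ h1
      refine ⟨le_rfl, h2, fun u' hu' => ?_⟩
      rcases Nat.lt_succ_iff_lt_or_eq.1 hu' with hu' | rfl
      · obtain ⟨h4, h5⟩ := h3 u' hu'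
        exact ⟨h4, h5.trans (by simp only; omega)⟩
      · refine ⟨hother i _ ((G i).mem_all_run h1), ?_⟩
        have := ((h.wf i).run e _ h1).2.1
        rw [hsc, h1]
        simp only [Option.map_some, true_iff]
        omega

theorem Inv.foldl {ε : ℝ} {I : MInstance m} {sc : Fin m → ℕ → Option ℕ} {V B : Fin m → ℕ → ℝ}
    {u : ℕ} (hm : 0 < m) (hε : 0 < ε) (hε1 : ε ≤ 1) (as : List (Job m))
    (has : ∀ a ∈ as, a.id ∈ I.J ∧ a.r = u ∧ I.r a.id = u ∧ a.w = I.w a.id ∧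
      ∀ i, a.pv i = I.p i a.id) :
    ∀ (D : Multiset ℕ) (G : Fin m → Mach m), Inv ε I sc V B u D G →
      Inv ε I sc V B u (((as.map fun a => a.id : List ℕ) : Multiset ℕ) + D)
        (as.foldl (NPSched.arrive hm ε u) G) := by
  induction as with
  | nil => intro D G h; simpa using h
  | cons a as ih =>
    intro D G h
    obtain ⟨h1, h2, h3, h4, h5⟩ := has a List.mem_cons_self
    have := ih (fun b hb => has b (List.mem_cons_of_mem _ hb)) _ _
      (h.arrive hm hε hε1 a h1 h2 h3 h4 h5)
    simpa [← Multiset.cons_coe] using this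

/-! ### The run of the algorithm -/

section Run

variable (hm : 0 < m) (ε : ℝ) (I : MInstance m)

/-- Weight present on machine `i` in slot `t`. -/
def wV (i : Fin m) (t : ℕ) : ℝ :=
  (slot hm ε (arrOf I) t i).rw + qW (slot hm ε (arrOf I) t i).q

/-- Dual value of slot `t` on machine `i`, as far as it is determined by the drops up to `t`. -/
def dB (i : Fin m) (t : ℕ) : ℝ := wV hm ε I i t + Vt t (slot hm ε (arrOf I) t i).log

/-- The invariant for the schedule computed by the algorithm. -/
abbrev AInv (u : ℕ) (D : Multiset ℕ) (G : Fin m → Mach m) : Prop :=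
  Inv ε I (alg hm ε I).sched (wV hm ε I) (dB hm ε I) u D G

theorem AInv.slot_of_pre {hm : 0 < m} {ε : ℝ} {I : MInstance m} (hε : 0 < ε) (hε1 : ε ≤ 1)
    {t : ℕ} (h : AInv hm ε I t (I.J.filter fun j => I.r j < t).val (pre hm ε (arrOf I) t)) :
    AInv hm ε I t (I.J.filter fun j => I.r j < t + 1).val (slot hm ε (arrOf I) t) ∧
      (∀ i, (slot hm ε (arrOf I) t i).run = none → (slot hm ε (arrOf I) t i).q = 0) ∧
      (arrOf I t = [] → ∀ i, (slot hm ε (arrOf I) t i).rem + qP (slot hm ε (arrOf I) t i).q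
        = (pre hm ε (arrOf I) t i).rem + qP (pre hm ε (arrOf I) t i).q) := by
  have hf := Inv.foldl hm hε hε1 (arrOf I t) (by
    intro a ha
    simp only [arrOf, List.mem_map, mem_sort, mem_filter] at ha
    obtain ⟨j, ⟨h1, h2⟩, rfl⟩ := ha
    exact ⟨h1, h2, h2, rfl, fun _ => rfl⟩) _ _ h
  have hD : (((arrOf I t).map fun a => a.id : List ℕ) : Multiset ℕ)
      + (I.J.filter fun j => I.r j < t).val = (I.J.filter fun j => I.r j < t + 1).val := by
    have h1 : (arrOf I t).map (fun a => a.id) = (I.J.filter fun j => I.r j = t).sort (· ≤ ·) := by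
      unfold arrOf
      rw [List.map_map]
      exact List.map_id _
    rw [h1, sort_eq, filter_val, filter_val, filter_val, Multiset.filter_add_filter]
    have h2 : Multiset.filter (fun j => I.r j = t ∧ I.r j < t) I.J.val = 0 := by
      rw [Multiset.filter_eq_nil]
      intro a _; omega
    rw [h2, add_zero]
    refine Multiset.filter_congr fun j _ => ?_
    omega
  rw [hD] at hf
  refine ⟨hf.start, fun i => (startM_spec t (ε := ε) _ (hf.wf i)).2.2.2.2.2.1, fun ha i => ?_⟩
  have := (startM_spec t (ε := ε) _ (hf.wf i)).2.2.2.2.2.2.1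
  unfold slot slotOf
  rw [this, ha]
  rfl

theorem AInv.pre_all {hm : 0 < m} {ε : ℝ} {I : MInstance m} (hε : 0 < ε) (hε1 : ε ≤ 1) (t : ℕ) :
    AInv hm ε I t (I.J.filter fun j => I.r j < t).val (pre hm ε (arrOf I) t) := by
  induction t with
  | zero =>
    refine ⟨fun i => ⟨?_, ?_, ?_, ?_⟩, ?_, ?_, ?_, ?_, ?_, ?_, ?_, ?_, ?_, ?_, ?_⟩ <;>
      simp [pre, Mach.init, Mach.all, Pot, Mach.rem, Mach.rz, Mach.rw, rejPot, flowPot, qPsi, VC]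
  | succ t ih =>
    obtain ⟨h1, h2, -⟩ := ih.slot_of_pre hε hε1
    exact h1.tick hε (nodup _) h2 (fun _ => rfl) (fun _ => rfl) fun _ => rfl

/-- The log and the set of rejected jobs only grow. -/
def Grow (M M' : Mach m) : Prop := M.log ≤ M'.log ∧ M.rej ≤ M'.rej

theorem Grow.rfl {M : Mach m} : Grow M M := ⟨le_rfl, le_rfl⟩

theorem Grow.trans {M₁ M₂ M₃ : Mach m} (h : Grow M₁ M₂) (h' : Grow M₂ M₃) : Grow M₁ M₃ :=
  ⟨h.1.trans h'.1, h.2.trans h'.2⟩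

theorem grow_dropQ (s k : ℕ) : ∀ (b : ℝ) (M : Mach m), Grow M (dropQ s k b M) := by
  induction k with
  | zero => exact fun _ _ => Grow.rfl
  | succ k ih =>
    intro b M
    simp only [dropQ]
    split_ifs
    · exact Grow.rfl
    · exact Grow.trans ⟨Multiset.le_cons_self _ _, Multiset.le_cons_self _ _⟩ (ih _ _)
    · exact ⟨Multiset.le_cons_self _ _, le_rfl⟩

theorem grow_dropRun (s : ℕ) (b : ℝ) (M : Mach m) : Grow M (dropRun s b M) := by
  unfold dropRun
  split
  · exact Grow.rfl
  · split_ifs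
    · exact ⟨Multiset.le_cons_self _ _, Multiset.le_cons_self _ _⟩
    · exact ⟨Multiset.le_cons_self _ _, le_rfl⟩

theorem grow_arrive (s : ℕ) (G : Fin m → Mach m) (a : Job m) (i : Fin m) :
    Grow (G i) (arrive hm ε s G a i) := by
  simp only [arrive]
  by_cases hi : i = (exists_min_mach hm fun i => lamOf ε (G i) i a).choose
  · rw [← hi, Function.update_self]
    exact (grow_dropQ _ _ _ _).trans (grow_dropRun s _ _)
  · rw [Function.update_of_ne hi]; exact Grow.rfl

theorem grow_foldl (s : ℕ) (as : List (Job m)) (i : Fin m) :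
    ∀ G : Fin m → Mach m, Grow (G i) (as.foldl (arrive hm ε s) G i) := by
  induction as with
  | nil => exact fun _ => Grow.rfl
  | cons a as ih => exact fun G => (grow_arrive hm ε s G a i).trans (ih _)

theorem grow_startM (M : Mach m) : Grow M (startM M) := by
  unfold startM
  split
  · exact Grow.rfl
  · split_ifs
    · exact Grow.rfl
    · exact ⟨le_rfl, le_rfl⟩

theorem grow_tickM (u : ℕ) (M : Mach m) : Grow M (tickM u M) := by
  unfold tickM
  split
  · exact Grow.rfl
  · split_ifs <;> exact ⟨le_rfl, le_rfl⟩

theorem grow_pre (arr : ℕ → List (Job m)) (i : Fin m) {t u : ℕ} (h : t ≤ u) :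
    Grow (pre hm ε arr t i) (pre hm ε arr u i) := by
  induction u, h using Nat.le_induction with
  | base => exact Grow.rfl
  | succ u _ ih =>
    exact ih.trans ((grow_foldl hm ε u (arr u) i _).trans
      ((grow_startM _).trans (grow_tickM u _)))

theorem grow_slot (arr : ℕ → List (Job m)) (i : Fin m) {t u : ℕ} (h : t < u) :
    Grow (slot hm ε arr t i) (pre hm ε arr u i) :=
  (grow_tickM t _).trans (grow_pre hm ε arr i (t := t + 1) h)

/-- Eventually all machines are idle for good. -/
theorem exists_horizon {hm : 0 < m} {ε : ℝ} {I : MInstance m} (hε : 0 < ε) (hε1 : ε ≤ 1) :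
    ∃ T, (∀ j ∈ I.J, I.r j < T) ∧
      ∀ t, T ≤ t → ∀ i, (pre hm ε (arrOf I) t i).run = none ∧ (pre hm ε (arrOf I) t i).q = 0 ∧
        (slot hm ε (arrOf I) t i).run = none := by
  set T₀ := I.J.sup I.r + 1
  have hT₀ : ∀ j ∈ I.J, I.r j < T₀ := fun j hj => Nat.lt_succ_of_le (le_sup hj)
  have harr : ∀ t, T₀ ≤ t → arrOf I t = [] := by
    intro t ht
    have : (I.J.filter fun j => I.r j = t) = ∅ := by
      rw [filter_eq_empty_iff]
      intro j hj h
      have := hT₀ j hj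
      omega
    simp [arrOf, this]
  let W : ℕ → Fin m → ℕ := fun t i =>
    (pre hm ε (arrOf I) t i).rem + qP (pre hm ε (arrOf I) t i).q
  have hstep : ∀ t, T₀ ≤ t → ∀ i, W (t + 1) i = W t i - 1 := by
    intro t ht i
    obtain ⟨h1, h2, h3⟩ := (AInv.pre_all (hm := hm) (I := I) hε hε1 t).slot_of_pre hε hε1
    have h4 := (tickM_spec t hε _ (h1.wf i) (h2 i)).2.2.2.2.2.2.2.2.2.1
    simp only [W]
    rw [← h3 (harr t ht) i]
    exact h4
  have hk : ∀ k i, W (T₀ + k) i = W T₀ i - k := by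
    intro k i
    induction k with
    | zero => rfl
    | succ k ih =>
      rw [← add_assoc, hstep _ (by omega), ih]; omega
  refine ⟨T₀ + ∑ i, W T₀ i, fun j hj => (hT₀ j hj).trans_le (by omega), fun t ht i => ?_⟩
  have h0 : W t i = 0 := by
    obtain ⟨k, rfl⟩ : ∃ k, t = T₀ + k := ⟨t - T₀, by omega⟩
    rw [hk]
    have := single_le_sum (f := W T₀) (fun _ _ => Nat.zero_le _) (mem_univ i)
    omega
  have hI := AInv.pre_all (hm := hm) (I := I) hε hε1 t
  obtain ⟨h1, -, h3⟩ := hI.slot_of_pre hε hε1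
  have hnone : ∀ M : Mach m, Wf M → M.rem + qP M.q = 0 → M.run = none ∧ M.q = 0 := by
    intro M hM h
    constructor
    · rcases hr : M.run with _ | ⟨e, n⟩
      · rfl
      · have := (hM.run e n hr).1
        simp only [Mach.rem, hr, Option.elim_some] at h
        omega
    · by_contra hq
      obtain ⟨e, he⟩ := Multiset.exists_mem_of_ne_zero hq
      obtain ⟨q', hq'⟩ := Multiset.exists_cons_of_mem he
      have := hM.q_pos e he
      rw [hq', qP_cons] at h
      omega
  have h4 := hnone _ (hI.wf i) h0
  have h5 := hnone _ (h1.wf i) ((h3 (harr t (by omega)) i).trans h0)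
  exact ⟨h4.1, h4.2, h5.1⟩

end Run

/-! ### Weak duality and the resulting bounds -/

theorem sum_map_le_of_le {α : Type*} {s t : Multiset α} (h : s ≤ t) (g : α → ℝ)
    (hg : ∀ x ∈ t, 0 ≤ g x) : (s.map g).sum ≤ (t.map g).sum := by
  obtain ⟨r, rfl⟩ := Multiset.le_iff_exists_add.1 h
  rw [Multiset.map_add, Multiset.sum_add]
  have : 0 ≤ (r.map g).sum := by
    refine Multiset.sum_nonneg ?_
    simp only [Multiset.mem_map, forall_exists_index, and_imp]
    rintro x e he rfl
    exact hg e (Multiset.mem_add.2 (Or.inr he))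
  linarith

theorem sum_map_sum {α : Type*} (s : Fin m → Multiset α) (g : α → ℝ) :
    ((∑ i, s i).map g).sum = ∑ i, ((s i).map g).sum := by
  have h := map_sum (Multiset.sumAddMonoidHom.comp (Multiset.mapAddMonoidHom g)) s univ
  exact h

theorem map_finset_sum {α β : Type*} (s : Fin m → Multiset α) (g : α → β) :
    (∑ i, s i).map g = ∑ i, (s i).map g :=
  map_sum (Multiset.mapAddMonoidHom g) s univ

theorem sum_map_nonneg {α : Type*} (s : Multiset α) (g : α → ℝ) (hg : ∀ x ∈ s, 0 ≤ g x) :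
    0 ≤ (s.map g).sum := by
  simpa using sum_map_le_of_le (Multiset.zero_le s) g hg

theorem Wf.rejPot_ge {M : Mach m} (h : Wf M) : (M.rej.map fun a => a.w).sum ≤ rejPot M := by
  have h1 := h.rz_nonneg.2
  have h2 := sum_map_nonneg M.q (fun e => 2 * (e.j.w - e.v)) fun e he => by
    have := (h.q e he).2; linarith
  unfold rejPot; linarith

theorem Wf.Pot_ge {ε : ℝ} (hε : 0 < ε) {M : Mach m} (h : Wf M) : VC M.log ≤ Pot ε M := by
  have h1 := h.rz_nonneg
  have h2 := qW_nonneg _ h.q_nonneg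
  have h3 := qPsi_nonneg _ h.q_nonneg
  have h4 := sum_map_nonneg M.q (fun e => e.j.w * (e.j.p : ℝ)) fun e he => by
    have := (h.all _ (M.mem_all_q he)).2; positivity
  have h5 : 0 ≤ M.rem * (2 / ε * M.rz + M.rw) := by
    have h6 := h1.1
    have h7 : 0 ≤ M.rw := by linarith
    positivity
  have h6 : 0 ≤ (1 + 2 / ε) * (M.q.map fun e => e.j.w * (e.j.p : ℝ)).sum := by positivity
  have h7 : 0 ≤ M.rem * qW M.q := by positivity
  unfold Pot; linarith

theorem wV_nonneg {hm : 0 < m} {ε : ℝ} {I : MInstance m} (hε : 0 < ε) (hε1 : ε ≤ 1) (i : Fin m)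
    (t : ℕ) : 0 ≤ wV hm ε I i t := by
  have h := ((AInv.pre_all (hm := hm) (I := I) hε hε1 t).slot_of_pre hε hε1).1.wf i
  have h1 := h.rz_nonneg
  have h2 := qW_nonneg _ h.q_nonneg
  unfold wV; linarith

theorem dB_nonneg {hm : 0 < m} {ε : ℝ} {I : MInstance m} (hε : 0 < ε) (hε1 : ε ≤ 1) (i : Fin m)
    (t : ℕ) : 0 ≤ dB hm ε I i t := by
  have h := ((AInv.pre_all (hm := hm) (I := I) hε hε1 t).slot_of_pre hε hε1).1.wf i
  exact add_nonneg (wV_nonneg hε hε1 i t) (Vt_nonneg _ _ h.log)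

theorem Vt_mono {t : ℕ} {l l' : Multiset (ℝ × ℕ × ℕ)} (h : l ≤ l') (hl : ∀ d ∈ l', 0 ≤ d.1) :
    Vt t l ≤ Vt t l' := by
  refine sum_map_le_of_le h _ fun d hd => ?_
  split_ifs
  · exact hl d hd
  · exact le_rfl

/-- The dual variables of all slots sum up to at most a `1 - ε / 2` fraction of the dual variables
of the jobs. -/
theorem sum_dB_le {hm : 0 < m} {ε : ℝ} {I : MInstance m} (hε : 0 < ε) (hε1 : ε ≤ 1) (i : Fin m)
    (T : ℕ) : ∑ t ∈ range T, dB hm ε I i t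
      ≤ (1 - ε / 2) * ((pre hm ε (arrOf I) T i).all.map fun a => a.l).sum := by
  have h := AInv.pre_all (hm := hm) (I := I) hε hε1 T
  have h1 := (h.wf i).Pot_ge hε
  have h2 := sum_Vt_le T _ (h.wf i).log
  have h3 : ∑ t ∈ range T, Vt t (slot hm ε (arrOf I) t i).log
      ≤ ∑ t ∈ range T, Vt t (pre hm ε (arrOf I) T i).log :=
    sum_le_sum fun t ht =>
      Vt_mono (grow_slot hm ε (arrOf I) i (mem_range.1 ht)).1 (h.wf i).log
  have h4 := h.cost i
  simp only [dB, sum_add_distrib]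
  linarith

/-- The dual constraint of a job against its processing in a feasible schedule. The schedule
may process more than the whole job; the excess `f - 1` is harmless since the constraint is
only scaled by `f ≥ 1` where it helps. -/
theorem job_dual {hm : 0 < m} {ε : ℝ} {I : MInstance m} (hε : 0 < ε) (hε1 : ε ≤ 1) {T : ℕ}
    {osched : Fin m → ℕ → Option ℕ} {C : ℕ → ℕ} (hO : MOffOK I osched C)
    (hC : ∀ j ∈ I.J, C j ≤ T) (k : Fin m) (a : Job m)
    (ha : a ∈ (pre hm ε (arrOf I) T k).all) :
    a.l ≤ ∑ i, ∑ t ∈ range (C a.id) with osched i t = some a.id, dB hm ε I i t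
      + (8 / ε + 4) * (I.w a.id * ((C a.id : ℝ) - I.r a.id)) := by
  have h := AInv.pre_all (hm := hm) (I := I) hε hε1 T
  obtain ⟨a1, a2, a3, a4, -, -⟩ := h.inst k a ha
  have hfin := h.fin k a ha
  obtain ⟨o1, o2, o3⟩ := hO
  obtain ⟨o4, o5⟩ := o3 _ a1
  have hw : 0 ≤ a.w := by rw [a3]; exact (I.hw _ a1).le
  rw [← a3, ← a2]
  rw [← a2] at o4
  set j := a.id with hj
  let K : Fin m → Finset ℕ := fun i => {t ∈ range (C j) | osched i t = some j}
  have hrC : (a.r : ℝ) ≤ C j := by exact_mod_cast o4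
  -- at most one machine processes the job in a slot, and only after its release
  have hN : ∑ i, ((K i).card : ℝ) ≤ (C j : ℝ) - a.r := by
    have h1 : (univ.biUnion K).card = ∑ i, (K i).card := by
      refine card_biUnion fun i _ i' _ hii => disjoint_left.2 fun t ht ht' => hii ?_
      simp only [K, mem_filter] at ht ht'
      exact o2 t j i i' ht.2 ht'.2
    have h2 : (univ.biUnion K).card ≤ (Ico a.r (C j)).card := by
      refine card_le_card fun t ht => ?_
      simp only [K, mem_biUnion, mem_univ, true_and, mem_filter, mem_range] at ht
      obtain ⟨i, h3, h4⟩ := ht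
      rw [mem_Ico, a2]
      exact ⟨(o1 i t j h4).2, h3⟩
    rw [h1, Nat.card_Ico] at h2
    have h3 : ∑ i, (K i).card + a.r ≤ C j := by omega
    have h4 : ((∑ i, (K i).card + a.r : ℕ) : ℝ) ≤ C j := by exact_mod_cast h3
    push_cast at h4
    linarith
  set f : ℝ := ∑ i, ((K i).card : ℝ) / I.p i j with hf
  have hB0 : 0 ≤ ∑ i, ∑ t ∈ K i, dB hm ε I i t :=
    sum_nonneg fun i _ => sum_nonneg fun t _ => dB_nonneg hε hε1 i t
  set Bs := ∑ i, ∑ t ∈ K i, dB hm ε I i t with hBs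
  have hslot : ∀ i, ((K i).card : ℝ) / I.p i j * (a.l - 4 * (a.w * ((C j : ℝ) - a.r)))
      ≤ 8 / ε * a.w * (K i).card + ∑ t ∈ K i, dB hm ε I i t := by
    intro i
    have hp : (0 : ℝ) < I.p i j := by exact_mod_cast I.hp i j a1
    have h1 : ∑ t ∈ K i, (a.l - 4 * (a.w * ((C j : ℝ) - a.r)))
        ≤ ∑ t ∈ K i, (I.p i j * (8 / ε * a.w) + I.p i j * dB hm ε I i t) := by
      refine sum_le_sum fun t ht => ?_
      simp only [K, mem_filter, mem_range] at ht
      have h2 := hfin i t (by rw [a2]; exact (o1 i t j ht.2).2) (ht.1.trans_le (hC j a1))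
      rw [a4] at h2
      have h3 : ((t : ℝ) + 1) ≤ C j := by exact_mod_cast ht.1
      have h4 : a.w * ((t : ℝ) + 1 - a.r) ≤ a.w * ((C j : ℝ) - a.r) :=
        mul_le_mul_of_nonneg_left (by linarith) hw
      linarith
    rw [sum_const, nsmul_eq_mul, sum_add_distrib, sum_const, nsmul_eq_mul, ← mul_sum] at h1
    rw [div_mul_eq_mul_div, div_le_iff₀ hp]
    linarith
  have hsum := sum_le_sum fun i (_ : i ∈ univ) => hslot i
  rw [← sum_mul, sum_add_distrib, ← mul_sum, ← hf, ← hBs] at hsum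
  have h5 : 8 / ε * a.w * ∑ i, ((K i).card : ℝ) ≤ 8 / ε * a.w * ((C j : ℝ) - a.r) :=
    mul_le_mul_of_nonneg_left hN (by positivity)
  have h6 : 0 ≤ 8 / ε * a.w * ((C j : ℝ) - a.r) :=
    mul_nonneg (by positivity) (by linarith)
  have h7 : a.l - 4 * (a.w * ((C j : ℝ) - a.r)) ≤ 8 / ε * a.w * ((C j : ℝ) - a.r) + Bs := by
    rcases le_total 0 (a.l - 4 * (a.w * ((C j : ℝ) - a.r))) with h8 | h8
    · have := le_mul_of_one_le_left h8 o5
      linarith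
    · linarith
  linarith

/-- Weak duality. -/
theorem dual_bound {hm : 0 < m} {ε : ℝ} {I : MInstance m} (hε : 0 < ε) (hε1 : ε ≤ 1) {T : ℕ}
    {osched : Fin m → ℕ → Option ℕ} {C : ℕ → ℕ} (hO : MOffOK I osched C)
    (hr : ∀ j ∈ I.J, I.r j < T) (hC : ∀ j ∈ I.J, C j ≤ T) :
    ε / 2 * ∑ i, ((pre hm ε (arrOf I) T i).all.map fun a => a.l).sum
      ≤ (8 / ε + 4) * ∑ j ∈ I.J, I.w j * ((C j : ℝ) - I.r j) := by
  have h := AInv.pre_all (hm := hm) (I := I) hε hε1 T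
  have hids := h.ids
  rw [filter_true_of_mem hr] at hids
  set g : ℕ → ℝ := fun j => ∑ i, ∑ t ∈ range (C j) with osched i t = some j, dB hm ε I i t
      + (8 / ε + 4) * (I.w j * ((C j : ℝ) - I.r j)) with hg
  have h1 : ∑ i, ((pre hm ε (arrOf I) T i).all.map fun a => a.l).sum ≤ ∑ j ∈ I.J, g j := by
    have h2 : ∑ j ∈ I.J, g j = ∑ i, ((pre hm ε (arrOf I) T i).all.map fun a => g a.id).sum := by
      rw [← sum_map_sum, sum_eq_multiset_sum, ← hids, ← map_finset_sum, Multiset.map_map]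
      rfl
    rw [h2]
    exact sum_le_sum fun i _ => Multiset.sum_map_le_sum_map _ _ fun a ha =>
      job_dual hε hε1 hO hC i a ha
  have h3 : ∑ j ∈ I.J, ∑ i, ∑ t ∈ range (C j) with osched i t = some j, dB hm ε I i t
      ≤ ∑ i, ∑ t ∈ range T, dB hm ε I i t := by
    rw [sum_comm]
    refine sum_le_sum fun i _ => ?_
    have h4 : ∀ j ∈ I.J, ∑ t ∈ range (C j) with osched i t = some j, dB hm ε I i t
        ≤ ∑ t ∈ range T, if osched i t = some j then dB hm ε I i t else 0 := by
      intro j hj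
      rw [← sum_filter]
      refine sum_le_sum_of_subset_of_nonneg ?_ fun t _ _ => dB_nonneg hε hε1 i t
      exact filter_subset_filter _ (range_subset_range.2 (hC j hj))
    refine (sum_le_sum h4).trans ?_
    rw [sum_comm]
    refine sum_le_sum fun t _ => ?_
    have h0 := dB_nonneg (hm := hm) (I := I) hε hε1 i t
    rcases osched i t with _ | j₀
    · simpa using h0
    · simp only [Option.some.injEq, sum_ite_eq]
      split_ifs
      · exact le_rfl
      · exact h0
  have h5 := sum_le_sum fun i (_ : i ∈ univ) => sum_dB_le (hm := hm) (I := I) hε hε1 i T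
  rw [← mul_sum] at h5
  simp only [hg, sum_add_distrib, ← mul_sum] at h1
  linarith

theorem alg_rej_some {hm : 0 < m} {ε : ℝ} {I : MInstance m} {j s : ℕ}
    (h : (alg hm ε I).rej j = some s) : rejAt hm ε I j s := by
  classical
  simp only [alg] at h
  split_ifs at h with hh
  rw [← Option.some.inj h]
  exact Nat.find_spec hh

theorem alg_rej_ne_none {hm : 0 < m} {ε : ℝ} {I : MInstance m} {j : ℕ} :
    (alg hm ε I).rej j ≠ none ↔ ∃ s, rejAt hm ε I j s := by
  classical
  simp only [alg]
  split_ifs with hh <;> simp [hh]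

/-- From some time on, each job is either among the rejected ones or finished. -/
theorem exists_final {hm : 0 < m} {ε : ℝ} {I : MInstance m} (hε : 0 < ε) (hε1 : ε ≤ 1) :
    ∃ T, (∀ j ∈ I.J, I.r j < T) ∧
      (∀ t, T ≤ t → ∀ i, (slot hm ε (arrOf I) t i).run = none) ∧
      (∀ j ∈ MRej I (alg hm ε I), ∃ i, ∃ a ∈ (pre hm ε (arrOf I) T i).rej, a.id = j) ∧
      (∀ j ∈ I.J \ MRej I (alg hm ε I), ∃ d : Job m × ℕ, ∃ i,
        d ∈ (pre hm ε (arrOf I) T i).done ∧ d.1.id = j) ∧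
      ∀ i, (pre hm ε (arrOf I) T i).q = 0 ∧ (pre hm ε (arrOf I) T i).run = none := by
  obtain ⟨T₁, hT₁, hidle⟩ := exists_horizon (hm := hm) (I := I) hε hε1
  have hs : ∀ j, ∃ s, j ∈ MRej I (alg hm ε I) → rejAt hm ε I j s := by
    intro j
    by_cases hj : j ∈ MRej I (alg hm ε I)
    · obtain ⟨s, hs⟩ := alg_rej_ne_none.1 (mem_filter.1 hj).2
      exact ⟨s, fun _ => hs⟩
    · exact ⟨0, fun h => absurd h hj⟩
  choose s hs using hs
  set T := T₁ + (MRej I (alg hm ε I)).sup s + 1 with hT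
  have hr : ∀ j ∈ I.J, I.r j < T := fun j hj => (hT₁ j hj).trans_le (by omega)
  refine ⟨T, hr, fun t ht i => (hidle t (by omega) i).2.2, ?_, ?_, fun i => ?_⟩
  · intro j hj
    obtain ⟨i, a, ha, hid⟩ := hs j hj
    have : s j ≤ (MRej I (alg hm ε I)).sup s := le_sup hj
    exact ⟨i, a, Multiset.mem_of_le (grow_slot hm ε (arrOf I) i (by omega)).2 ha, hid⟩
  · intro j hj
    obtain ⟨hjJ, hjR⟩ := mem_sdiff.1 hj
    have hids := (AInv.pre_all (hm := hm) (I := I) hε hε1 T).ids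
    rw [filter_true_of_mem hr] at hids
    have hj' : j ∈ ∑ i, (pre hm ε (arrOf I) T i).all.map (fun a => a.id) := by
      rw [hids]; exact hjJ
    obtain ⟨i, -, hi⟩ := Multiset.mem_sum.1 hj'
    obtain ⟨a, ha, haj⟩ := Multiset.mem_map.1 hi
    obtain ⟨h1, h2, -⟩ := hidle T (by omega) i
    simp only [Mach.all, h1, h2, Multiset.map_zero, Option.elim_none, zero_add,
      Multiset.mem_add, Multiset.mem_map] at ha
    rcases ha with ha | ⟨d, hd, hda⟩
    · refine absurd (mem_filter.2 ⟨hjJ, alg_rej_ne_none.2 ⟨T, i, a, ?_, haj⟩⟩) hjR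
      exact Multiset.mem_of_le ((grow_foldl hm ε T (arrOf I T) i _).trans (grow_startM _)).2 ha
    · exact ⟨d, i, hd, by rw [hda]; exact haj⟩
  · obtain ⟨h1, h2, -⟩ := hidle T (by omega) i
    exact ⟨h2, h1⟩

theorem rejected_weight {hm : 0 < m} {ε : ℝ} {I : MInstance m} (hε : 0 < ε) (hε1 : ε ≤ 1) :
    ∑ j ∈ MRej I (alg hm ε I), I.w j ≤ 3 * ε * ∑ j ∈ I.J, I.w j := by
  obtain ⟨T, hr, -, hR, -, -⟩ := exists_final (hm := hm) (I := I) hε hε1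
  have h := AInv.pre_all (hm := hm) (I := I) hε hε1 T
  have hids := h.ids
  rw [filter_true_of_mem hr] at hids
  have hw : ∀ i, ∀ s ≤ (pre hm ε (arrOf I) T i).all,
      (s.map fun a => I.w a.id) = s.map fun a => a.w := fun i s hs =>
    Multiset.map_congr rfl fun a ha => (h.inst i a (Multiset.mem_of_le hs ha)).2.2.1.symm
  have hrej : ∀ i, (pre hm ε (arrOf I) T i).rej ≤ (pre hm ε (arrOf I) T i).all := fun i => by
    unfold Mach.all
    exact (Multiset.le_add_left _ _).trans (Multiset.le_add_right _ _)
  have h1 : (MRej I (alg hm ε I)).val ≤ ∑ i, (pre hm ε (arrOf I) T i).rej.map fun a => a.id := by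
    rw [Multiset.le_iff_subset (nodup _)]
    intro j hj
    obtain ⟨i, a, ha, hid⟩ := hR j hj
    exact Multiset.mem_sum.2 ⟨i, mem_univ i, Multiset.mem_map.2 ⟨a, ha, hid⟩⟩
  have h2 : ∑ j ∈ MRej I (alg hm ε I), I.w j
      ≤ ∑ i, ((pre hm ε (arrOf I) T i).rej.map fun a => a.w).sum := by
    rw [sum_eq_multiset_sum]
    refine (sum_map_le_of_le h1 I.w ?_).trans_eq ?_
    · intro j hj
      obtain ⟨i, -, hi⟩ := Multiset.mem_sum.1 hj
      obtain ⟨a, ha, rfl⟩ := Multiset.mem_map.1 hi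
      exact (I.hw _ (h.inst i a (Mach.mem_all_rej ha)).1).le
    · rw [← map_finset_sum, Multiset.map_map, sum_map_sum]
      exact sum_congr rfl fun i _ => congrArg _ (hw i _ (hrej i))
  have h3 : ∑ j ∈ I.J, I.w j = ∑ i, ((pre hm ε (arrOf I) T i).all.map fun a => a.w).sum := by
    rw [sum_eq_multiset_sum, ← hids, ← map_finset_sum, Multiset.map_map, sum_map_sum]
    exact sum_congr rfl fun i _ => congrArg _ (hw i _ le_rfl)
  rw [h3, mul_sum]
  exact h2.trans (sum_le_sum fun i _ => (h.wf i).rejPot_ge.trans (h.rej i))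

/-- The jobs of `S`, represented by entries `f j` of the lists of finished jobs, have
weighted flow-time at most twice the sum of all dual variables of jobs. -/
theorem flow_bound {hm : 0 < m} {ε : ℝ} {I : MInstance m} (hε : 0 < ε) (hε1 : ε ≤ 1) {T T' : ℕ}
    (hT : T ≤ T') (S : Finset ℕ) (f : ℕ → Job m × ℕ)
    (hf : ∀ j ∈ S, ∃ i, f j ∈ (pre hm ε (arrOf I) T i).done ∧ (f j).1.id = j)
    (hidle : ∀ i, (pre hm ε (arrOf I) T i).q = 0 ∧ (pre hm ε (arrOf I) T i).run = none) :
    ∑ j ∈ S, I.w j * (((f j).2 : ℝ) - I.r j)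
      ≤ 2 * ∑ i, ((pre hm ε (arrOf I) T' i).all.map fun a => a.l).sum := by
  have h := AInv.pre_all (hm := hm) (I := I) hε hε1 T
  let g : Job m × ℕ → ℝ := fun d => d.1.w * ((d.2 : ℝ) - d.1.r)
  have h1 : S.val.map f ≤ ∑ i, (pre hm ε (arrOf I) T i).done := by
    rw [Multiset.le_iff_subset]
    · intro d hd
      obtain ⟨j, hj, rfl⟩ := Multiset.mem_map.1 hd
      obtain ⟨i, hi, -⟩ := hf j hj
      exact Multiset.mem_sum.2 ⟨i, mem_univ i, hi⟩
    · refine Multiset.Nodup.map_on (fun j hj j' hj' hjj => ?_) (nodup S)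
      obtain ⟨_, -, h2⟩ := hf j hj
      obtain ⟨_, -, h3⟩ := hf j' hj'
      rw [← h2, ← h3, hjj]
  have h2 : ∑ j ∈ S, I.w j * (((f j).2 : ℝ) - I.r j)
      ≤ ∑ i, ((pre hm ε (arrOf I) T i).done.map g).sum := by
    have h3 : ∑ j ∈ S, I.w j * (((f j).2 : ℝ) - I.r j) = ((S.val.map f).map g).sum := by
      rw [sum_eq_multiset_sum, Multiset.map_map]
      refine congrArg _ (Multiset.map_congr rfl fun j hj => ?_)
      obtain ⟨i, hi, hid⟩ := hf j hj
      obtain ⟨-, b2, b3, -⟩ := h.inst i _ (Mach.mem_all_done hi)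
      rw [hid] at b2 b3
      simp only [Function.comp, g, b2, b3]
    rw [h3, ← sum_map_sum]
    refine sum_map_le_of_le h1 g fun d hd => ?_
    obtain ⟨i, -, hi⟩ := Multiset.mem_sum.1 hd
    have h4 := ((h.wf i).all _ (Mach.mem_all_done hi)).2
    have h5 : d.1.r ≤ d.2 := by
      have := (h.sd i d hi).2.1
      omega
    have h6 : (d.1.r : ℝ) ≤ d.2 := by exact_mod_cast h5
    exact mul_nonneg h4.le (by linarith)
  have h' := AInv.pre_all (hm := hm) (I := I) hε hε1 T'
  refine h2.trans ?_
  rw [mul_sum]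
  refine sum_le_sum fun i _ => ?_
  have h3 := h.flow i
  simp only [flowPot, (hidle i).1, (hidle i).2, Multiset.map_zero, Multiset.sum_zero,
    Option.elim_none, add_zero] at h3
  refine h3.trans ?_
  have h4 : ∑ t ∈ range T, wV hm ε I i t ≤ ∑ t ∈ range T', wV hm ε I i t :=
    sum_le_sum_of_subset_of_nonneg (range_subset_range.2 hT) fun t _ _ => wV_nonneg hε hε1 i t
  have h5 := h'.cost i
  have h6 := (h'.wf i).Pot_ge hε
  have h7 := VC_nonneg _ (h'.wf i).log
  have h8 : 0 ≤ ∑ t ∈ range T', wV hm ε I i t := sum_nonneg fun t _ => wV_nonneg hε hε1 i t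
  have h9 : 0 ≤ ((pre hm ε (arrOf I) T' i).all.map fun a => a.l).sum :=
    nonneg_of_mul_nonneg_right (a := 1 - ε / 2) (by linarith) (by linarith)
  have h10 : (1 - ε / 2) * ((pre hm ε (arrOf I) T' i).all.map fun a => a.l).sum
      ≤ 1 * ((pre hm ε (arrOf I) T' i).all.map fun a => a.l).sum := by
    gcongr; linarith
  linarith

/-- For every `ε` with `0 < ε`, `ε² ≤ 1/2` and `1/ε` a positive
integer, and every number `m` of unrelated machines, there are a constant `c > 0`
and a deterministic online algorithm which, on every instance `J`, rejects a set `R`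
of jobs of total weight at most `c·ε·∑_{j∈J} w_j`, schedules every job of `J ∖ R`
non-preemptively on one machine (job `j` being processed on a single machine `i` in
`p i j` consecutive slots, starting no earlier than `r j` and ending at its
completion time `C j`), and has total weighted flow-time `∑_{j∉R} w_j·(C_j − r_j)`
at most `(c/ε³)·F*`, where `F*` is the minimum total weighted flow-time of any
offline (possibly preemptive and migratory) schedule completing all jobs of `J`
(stated for every such offline schedule, hence for the optimal one). -/
theorem unrelated_machines_rejection_theorem :
    ∃ c : ℝ, 0 < c ∧
      ∀ ε : ℝ, 0 < ε → ε ^ 2 ≤ 1 / 2 → (∃ k : ℕ, 0 < k ∧ (k : ℝ) = 1 / ε) →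
      ∀ m : ℕ, 0 < m →
      ∃ Alg : MInstance m → MOutput m, MOnline Alg ∧
        ∀ I : MInstance m,
          (∀ i t j, (Alg I).sched i t = some j → j ∈ I.J ∧ I.r j ≤ t) ∧
          (∀ j s, (Alg I).rej j = some s → j ∈ I.J ∧ I.r j ≤ s) ∧
          (∑ j ∈ MRej I (Alg I), I.w j ≤ c * ε * ∑ j ∈ I.J, I.w j) ∧
          ∃ C : ℕ → ℕ,
            (∀ j ∈ I.J \ MRej I (Alg I), ∃ i : Fin m,
              I.r j + I.p i j ≤ C j ∧
              (∀ u, (Alg I).sched i u = some j ↔ C j - I.p i j ≤ u ∧ u < C j) ∧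
              (∀ i' : Fin m, i' ≠ i → ∀ u, (Alg I).sched i' u ≠ some j)) ∧
            ∀ osched : Fin m → ℕ → Option ℕ, ∀ C' : ℕ → ℕ, MOffOK I osched C' →
              ∑ j ∈ I.J \ MRej I (Alg I), I.w j * ((C j : ℝ) - (I.r j : ℝ)) ≤
                (c / ε ^ 3) * ∑ j ∈ I.J, I.w j * ((C' j : ℝ) - (I.r j : ℝ)) := by
  refine ⟨48, by norm_num, fun ε hε hε2 _ m hm => ?_⟩
  have hε1 : ε ≤ 1 := by nlinarith
  refine ⟨alg hm ε, alg_online hm ε, fun I => ⟨?_, ?_, ?_, ?_⟩⟩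
  · intro i t j hj
    exact (AInv.pre_all (hm := hm) (I := I) hε hε1 (t + 1)).rel i t j (Nat.lt_succ_self t) hj
  · intro j s hj
    obtain ⟨i, a, ha, rfl⟩ := alg_rej_some hj
    have h := ((AInv.pre_all (hm := hm) (I := I) hε hε1 s).slot_of_pre hε hε1).1
    obtain ⟨h1, h2, -, -, -, h3⟩ := h.inst i a (Mach.mem_all_rej ha)
    exact ⟨h1, h2 ▸ h3⟩
  · refine (rejected_weight hε hε1).trans ?_
    have : 0 ≤ ∑ j ∈ I.J, I.w j := sum_nonneg fun j hj => (I.hw j hj).le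
    gcongr
    norm_num
  obtain ⟨T, hr, hrun, -, hdone, hidle⟩ := exists_final (hm := hm) (I := I) hε hε1
  have : Nonempty (Job m) := ⟨⟨0, 0, 0, fun _ => 0, 0, 0⟩⟩
  choose! f hf using hdone
  refine ⟨fun j => (f j).2, fun j hj => ?_, fun osched C' hO => ?_⟩
  · obtain ⟨i, hi, hid⟩ := hf j hj
    have h := AInv.pre_all (hm := hm) (I := I) hε hε1 T
    obtain ⟨h1, h2, h3⟩ := h.sd i _ hi
    obtain ⟨-, h4, -, h5, h6, -⟩ := h.inst i _ (Mach.mem_all_done hi)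
    rw [h4, h6, h5, hid] at h2
    rw [h6, h5, hid] at h3
    have hnone : ∀ k u, T ≤ u → (alg hm ε I).sched k u = none := fun k u hu => by
      simp only [alg, hrun u hu k, Option.map_none]
    refine ⟨i, h2, fun u => ?_, fun i' hi' u => ?_⟩
    · change _ ↔ (f j).2 - I.p i j ≤ u ∧ u < (f j).2
      rcases lt_or_ge u T with hu | hu
      · rw [(h3 u hu).2]
        omega
      · rw [hnone i u hu]
        simp only [reduceCtorEq, false_iff]
        omega
    · rcases lt_or_ge u T with hu | hu
      · exact (h3 u hu).1 i' hi'
      · rw [hnone i' u hu]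
        simp
  · have h1 := flow_bound (hm := hm) (I := I) hε hε1 (Nat.le_add_right T (I.J.sup C')) _ f hf hidle
    have h2 := dual_bound (hm := hm) (I := I) hε hε1 (T := T + I.J.sup C') hO
      (fun j hj => (hr j hj).trans_le (Nat.le_add_right _ _))
      fun j hj => (le_sup hj).trans (Nat.le_add_left _ _)
    have hF : 0 ≤ ∑ j ∈ I.J, I.w j * ((C' j : ℝ) - I.r j) := by
      refine sum_nonneg fun j hj => mul_nonneg (I.hw j hj).le ?_
      have : (I.r j : ℝ) ≤ C' j := by exact_mod_cast (hO.2.2 j hj).1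
      linarith
    refine h1.trans ?_
    set F := ∑ j ∈ I.J, I.w j * ((C' j : ℝ) - I.r j)
    set L := ∑ i, ((pre hm ε (arrOf I) (T + I.J.sup C') i).all.map fun a => a.l).sum
    have h3 : (8 / ε + 4) * F ≤ 12 / ε * F := by
      refine mul_le_mul_of_nonneg_right ?_ hF
      have : 12 / ε = 8 / ε + 4 * (1 / ε) := by ring
      have : 1 ≤ 1 / ε := by rw [le_div_iff₀ hε]; linarith
      linarith
    have h4 : 2 * L = 4 / ε * (ε / 2 * L) := by field_simp; ring
    have h5 : 4 / ε * (ε / 2 * L) ≤ 4 / ε * (12 / ε * F) :=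
      mul_le_mul_of_nonneg_left (h2.trans h3) (by positivity)
    have h6 : 4 / ε * (12 / ε * F) = ε * (48 / ε ^ 3 * F) := by field_simp; ring
    have h7 : 0 ≤ 48 / ε ^ 3 * F := by positivity
    have h8 : ε * (48 / ε ^ 3 * F) ≤ 1 * (48 / ε ^ 3 * F) := by gcongr
    linarith

end NPSched
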